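/- arXiv:2405.02526 — 2 statements merged into one kernel-verified Lean document; each statement's English description precedes it below -/
import Mathlib

section
/- Let (s,q) be an admissible slope–constraint pair. Then the admissibility germ G_s(q) is L¹-dissipative: (i) every pair (k_l, k_r) ∈ G_s(q) satisfies the Rankine–Hugoniot condition F_s(k_l) = F_s(k_r); (ii) for all pairs (k_l, k_r) ∈ G_s(q) and (c_l, c_r) ∈ G_s(q), one has Φ_s(k_l, c_l) ≥ Φ_s(k_r, c_r). -/
/-!
The flux `F_s` is constant along each pair of the germ, with value at most `q`, so the
dissipation inequality only compares `sgn (k_l - c_l)` with `sgn (k_r - c_r)`, weighted by the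
difference of the two levels. If the levels agree, both sides vanish. Otherwise the inequality
could only fail if the pair with the lower level were strictly nested in the other one:
`c_l < k_l` and `k_r < c_r` when `F_s(k_l) < F_s(c_l)`. The lower pair has level below `q`, hence
it is not the nonclassical shock `(ρ̂_s(q), ρ̌_s(q))` and `k_l ≤ k_r`. So `k_l` lies between `c_l`
and `c_r`, where the concave function `F_s` is at least `F_s(c_l)`: a contradiction
(`Germ.not_nested`).
-/

open MeasureTheory Set Filter Topology

noncomputable section

/-- The normal flux `F_s(ρ) = f(ρ) - s·ρ` through the line of slope `s`. -/
def Flx (f : ℝ → ℝ) (s ρ : ℝ) : ℝ := f ρ - s * ρ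

/-- The Kruzhkov entropy flux `Φ_s(a,b) = sgn(a-b)(F_s(a) - F_s(b))`. -/
def EFlx (f : ℝ → ℝ) (s a b : ℝ) : ℝ := Real.sign (a - b) * (Flx f s a - Flx f s b)

/-- `f` is a bell-shaped flux with critical density `ρb`:
`f` is `C²` on `[0,1]`, vanishes at `0` and `1`, is concave on `[0,1]`, and its
derivative has the sign of `ρb - ρ` a.e. on `(0,1)`. -/
structure BellShaped (f : ℝ → ℝ) (ρb : ℝ) : Prop where
  smooth : ContDiffOn ℝ 2 f (Icc 0 1)
  zero_at_zero : f 0 = 0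
  zero_at_one : f 1 = 0
  concave : ConcaveOn ℝ (Icc 0 1) f
  crit_mem : ρb ∈ Ioo (0:ℝ) 1
  deriv_sign : ∀ᵐ ρ ∂(volume.restrict (Ioo (0:ℝ) 1)),
    0 < derivWithin f (Icc 0 1) ρ * (ρb - ρ)

/-- `max_{[0,1]} F_s`. -/
def maxFlx (f : ℝ → ℝ) (s : ℝ) : ℝ := sSup (Flx f s '' Icc 0 1)

/-- Admissible slope–constraint pair `(s,q)`. -/
def AdmissiblePair (f : ℝ → ℝ) (s q : ℝ) : Prop :=
  (0 ≤ s ∧ 0 ≤ q ∧ q < maxFlx f s) ∨ (s < 0 ∧ -s ≤ q ∧ q < maxFlx f s)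

/-- The admissibility germ `G_s(q) = G¹ ∪ G² ∪ G³`. -/
def Germ (f : ℝ → ℝ) (s q : ℝ) : Set (ℝ × ℝ) :=
  {p | p.1 ∈ Icc (0:ℝ) 1 ∧ p.2 ∈ Icc (0:ℝ) 1 ∧
    ((p.2 < p.1 ∧ Flx f s p.1 = q ∧ Flx f s p.2 = q) ∨
     (p.1 = p.2 ∧ Flx f s p.1 ≤ q) ∨
     (p.1 < p.2 ∧ Flx f s p.1 = Flx f s p.2 ∧ Flx f s p.1 ≤ q))}

/-- The constraint remainder `ℛ_s(κ,q) = 2(F_s(κ) - min{F_s(κ), q})`. -/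
def Rem (f : ℝ → ℝ) (s κ q : ℝ) : ℝ := 2 * (Flx f s κ - min (Flx f s κ) q)

lemma BellShaped.concaveOn_Flx {f : ℝ → ℝ} {ρb : ℝ} (hf : BellShaped f ρb) (s : ℝ) :
    ConcaveOn ℝ (Icc 0 1) (Flx f s) := by
  refine ⟨convex_Icc 0 1, fun x hx y hy a b ha hb hab => ?_⟩
  have h := hf.concave.2 hx hy ha hb hab
  simp only [Flx, smul_eq_mul] at h ⊢
  linarith

lemma Germ.rankineHugoniot {f : ℝ → ℝ} {s q : ℝ} {k : ℝ × ℝ} (hk : k ∈ Germ f s q) :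
    Flx f s k.1 = Flx f s k.2 := by
  obtain ⟨-, -, ⟨-, h₁, h₂⟩ | ⟨h, -⟩ | ⟨-, h, -⟩⟩ := hk
  · rw [h₁, h₂]
  · rw [h]
  · exact h

lemma Germ.level_le {f : ℝ → ℝ} {s q : ℝ} {k : ℝ × ℝ} (hk : k ∈ Germ f s q) :
    Flx f s k.1 ≤ q := by
  obtain ⟨-, -, ⟨-, h, -⟩ | ⟨-, h⟩ | ⟨-, -, h⟩⟩ := hk
  · exact h.le
  · exact h
  · exact h

/-- A germ pair of lower level is not strictly nested in a germ pair of higher level: being below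
the level `q` it is ordered `k_l ≤ k_r`, and concavity keeps `F_s` above `F_s(c_l)` on
`[c_l, c_r]`. -/
lemma Germ.not_nested {f : ℝ → ℝ} {s q : ℝ} (hF : ConcaveOn ℝ (Icc 0 1) (Flx f s))
    {k c : ℝ × ℝ} (hk : k ∈ Germ f s q) (hc : c ∈ Germ f s q)
    (hlt : Flx f s k.1 < Flx f s c.1) (hl : c.1 < k.1) (hr : k.2 < c.2) : False := by
  have hle : k.1 ≤ k.2 := by
    have hq := Germ.level_le hc
    obtain ⟨-, -, ⟨-, h, -⟩ | ⟨h, -⟩ | ⟨h, -, -⟩⟩ := hk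
    · linarith
    · exact h.le
    · exact h.le
  have hmin := hF.min_le_of_mem_Icc hc.1 hc.2.1 ⟨hl.le, hle.trans hr.le⟩
  rw [← Germ.rankineHugoniot hc, min_self] at hmin
  linarith

/-- the admissibility germ `G_s(q)` is `L¹`-dissipative:
(i) Rankine–Hugoniot condition, (ii) dissipativity of the entropy flux. -/
theorem germ_is_L1_dissipative
    (f : ℝ → ℝ) (ρb : ℝ) (hf : BellShaped f ρb)
    (s q : ℝ) (hsq : AdmissiblePair f s q) :
    (∀ k ∈ Germ f s q, Flx f s k.1 = Flx f s k.2) ∧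
    (∀ k ∈ Germ f s q, ∀ c ∈ Germ f s q,
      EFlx f s k.2 c.2 ≤ EFlx f s k.1 c.1) := by
  refine ⟨fun k hk => Germ.rankineHugoniot hk, fun k hk c hc => ?_⟩
  have hF := hf.concaveOn_Flx s
  have hk' := Germ.rankineHugoniot hk
  have hc' := Germ.rankineHugoniot hc
  unfold EFlx
  rw [← hk', ← hc']
  rcases eq_or_ne (Flx f s k.1) (Flx f s c.1) with heq | hne
  · simp [heq]
  -- Distinct levels force distinct traces on each side, so both signs are `±1`.
  have h₁ : k.1 ≠ c.1 := fun h => hne (by rw [h])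
  have h₂ : k.2 ≠ c.2 := fun h => hne (by rw [hk', hc', h])
  rcases h₁.lt_or_gt with h₁ | h₁ <;> rcases h₂.lt_or_gt with h₂ | h₂
  · rw [Real.sign_of_neg (sub_neg.2 h₁), Real.sign_of_neg (sub_neg.2 h₂)]
  · rw [Real.sign_of_neg (sub_neg.2 h₁), Real.sign_of_pos (sub_pos.2 h₂)]
    have := not_lt.1 fun h => Germ.not_nested hF hc hk h h₁ h₂
    linarith
  · rw [Real.sign_of_pos (sub_pos.2 h₁), Real.sign_of_neg (sub_neg.2 h₂)]
    have := not_lt.1 fun h => Germ.not_nested hF hk hc h h₁ h₂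
    linarith
  · rw [Real.sign_of_pos (sub_pos.2 h₁), Real.sign_of_pos (sub_pos.2 h₂)]
end
end

section
/- Let ρ_o ∈ L∞(ℝ;[0,1]), y ∈ W^{1,∞}_loc((0,∞);ℝ), q ∈ L∞_loc((0,∞);ℝ), and assume (ẏ(t), q(t)) is an admissible slope–constraint pair for a.e. t > 0. Let ρ ∈ L∞(ℝ×(0,∞);[0,1]) be a G_{ẏ}(q)-entropy solution of the constrained Cauchy problem. Then ρ is an admissible entropy solution: for every κ ∈ [0,1] and every nonnegative φ ∈ C_c^∞(ℝ×[0,∞)) the entropy inequality with remainder term ℛ_{ẏ(t)}(κ, q(t)) holds, and for every nonnegative φ ∈ C_c^∞(ℝ×(0,∞)) the weak constraint inequality −∬_{{x>y(t)}}(ρ ∂_tφ + f(ρ)∂_xφ)dx dt ≤ ∫₀^∞ q(t)φ(y(t),t)dt holds. -/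
/-!
For a germ solution the entropy inequality is known for test functions supported away from the
interface `Γ`. The proof applies it to `φ(x,t) θ((x - y(t))/ε)`, where the profile `θ` vanishes near
`0`, equals `a ∈ [0,1]` on `(-∞,-1]` and `b ∈ [0,1]` on `[1,∞)`, and lets `ε → 0⁺`. The terms with
derivatives of `φ` converge to integrals with weight `a` to the left and `b` to the right of `Γ`
(`profile_lim`). The term with the derivative of `θ`, after the change of variables
`x = y(t) + ε z`, is an average of the fluxes through shifted copies of `Γ` (`layer_eq`), and the
strong traces identify its limit as
`b ∫ φ (Φ(ρ⁺,κ) - ẏ |ρ⁺ - κ|) dt - a ∫ φ (Φ(ρ⁻,κ) - ẏ |ρ⁻ - κ|) dt` (`layer_tendsto`). The outcome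
is `interface_ineq`.

With `a = b = 1` the jump term is `∫ φ (Φ_s(ρ⁺,κ) - Φ_s(ρ⁻,κ)) dt`, `s = ẏ(t)`, and the elementary
inequality `Φ_s(ρ⁺,κ) - Φ_s(ρ⁻,κ) ≤ ℛ_s(κ,q)` on the germ (`germ_ineq`) gives the entropy
inequality with remainder. With `a = 0`, `b = 1` and `κ = 0` the jump term is `∫ φ F_s(ρ⁺) dt`,
and `F_s ≤ q` at the states of the germ gives the constraint inequality.

Two regularity points need care. The admissibility of `(ẏ, q)` forces `|ẏ| ≤ K` and `|q| ≤ 2K`,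
with `K` a Lipschitz constant of `f` on `[0,1]` (`adm_bounds`), so that `y` coincides on `(0,∞)` with
a globally Lipschitz curve `Y`. Since `Y` is merely Lipschitz, the cut-off test function is not
smooth, and `Y` is first approximated by smooth curves whose slopes converge a.e.
(`smooth_approx`, `ineq_cut`).
-/

open MeasureTheory Set Filter Topology

noncomputable section

/-- `∂_t φ`. -/
def pT (φ : ℝ × ℝ → ℝ) (p : ℝ × ℝ) : ℝ := fderiv ℝ φ p (0, 1)

/-- `∂_x φ`. -/
def pX (φ : ℝ × ℝ → ℝ) (p : ℝ × ℝ) : ℝ := fderiv ℝ φ p (1, 0)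

/-- A nonnegative smooth compactly supported test function on `ℝ × ℝ`
(first variable `x`, second variable `t`). -/
def TestFun (φ : ℝ × ℝ → ℝ) : Prop :=
  ContDiff ℝ (⊤ : ℕ∞) φ ∧ HasCompactSupport φ ∧ ∀ p, 0 ≤ φ p

/-- `y ∈ W^{1,∞}_loc((0,∞))`: locally Lipschitz on `(0,∞)`. -/
def LocLip (y : ℝ → ℝ) : Prop :=
  ∀ K : Set ℝ, IsCompact K → K ⊆ Ioi 0 → ∃ C : NNReal, LipschitzOnWith C y K

/-- `q ∈ L∞_loc((0,∞))`: locally essentially bounded on `(0,∞)`. -/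
def LocBdd (q : ℝ → ℝ) : Prop :=
  ∀ K : Set ℝ, IsCompact K → K ⊆ Ioi 0 → ∃ M : ℝ,
    ∀ᵐ t ∂(volume.restrict K), |q t| ≤ M

/-- The interface `Γ = {(y(t), t) : t > 0}`. -/
def Gam (y : ℝ → ℝ) : Set (ℝ × ℝ) := {p | ∃ t, 0 < t ∧ p = (y t, t)}

/-- Interior term of the Kruzhkov entropy inequality. -/
def interiorTerm (f : ℝ → ℝ) (ρ : ℝ → ℝ → ℝ) (κ : ℝ) (φ : ℝ × ℝ → ℝ) : ℝ :=
  ∫ t in Ioi (0:ℝ), ∫ x : ℝ,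
    (|ρ x t - κ| * pT φ (x, t) + EFlx f 0 (ρ x t) κ * pX φ (x, t))

/-- Initial-datum term of the entropy inequality. -/
def initTerm (ρo : ℝ → ℝ) (κ : ℝ) (φ : ℝ × ℝ → ℝ) : ℝ :=
  ∫ x : ℝ, |ρo x - κ| * φ (x, 0)

/-- Remainder term of the entropy inequality, along the interface. -/
def remTerm (f : ℝ → ℝ) (y q : ℝ → ℝ) (κ : ℝ) (φ : ℝ × ℝ → ℝ) : ℝ :=
  ∫ t in Ioi (0:ℝ), Rem f (deriv y t) κ (q t) * φ (y t, t)

/-- Admissible entropy solution of the constrained Cauchy problem (Definition 2.1):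
entropy inequalities with remainder, and weak form of the flux constraint. -/
def IsAdmSol (f : ℝ → ℝ) (ρo y q : ℝ → ℝ) (ρ : ℝ → ℝ → ℝ) : Prop :=
  (∀ κ ∈ Icc (0:ℝ) 1, ∀ φ : ℝ × ℝ → ℝ, TestFun φ →
     0 ≤ interiorTerm f ρ κ φ + initTerm ρo κ φ + remTerm f y q κ φ) ∧
  (∀ φ : ℝ × ℝ → ℝ, TestFun φ → tsupport φ ⊆ univ ×ˢ Ioi (0:ℝ) →
     -(∫ t in Ioi (0:ℝ), ∫ x in Ioi (y t),
         (ρ x t * pT φ (x, t) + f (ρ x t) * pX φ (x, t)))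
       ≤ ∫ t in Ioi (0:ℝ), q t * φ (y t, t))

/-- `ρ` admits strong one-sided traces `ρm` (left) and `ρp` (right) along `Γ`. -/
def HasTraces (y : ℝ → ℝ) (ρ : ℝ → ℝ → ℝ) (ρm ρp : ℝ → ℝ) : Prop :=
  ∀ T : ℝ, 0 < T →
    Tendsto (fun ε : ℝ => ∫ t in Ioo (0:ℝ) T, |ρ (y t - ε) t - ρm t|)
      (𝓝[>] 0) (𝓝 0) ∧
    Tendsto (fun ε : ℝ => ∫ t in Ioo (0:ℝ) T, |ρ (y t + ε) t - ρp t|)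
      (𝓝[>] 0) (𝓝 0)

/-- `G_{ẏ}(q)`-entropy solution (Definition 2.4): entropy inequalities for test
functions supported away from `Γ`, plus the germ condition on the traces. -/
def IsGermSol (f : ℝ → ℝ) (ρo y q : ℝ → ℝ) (ρ : ℝ → ℝ → ℝ) (ρm ρp : ℝ → ℝ) : Prop :=
  (∀ κ ∈ Icc (0:ℝ) 1, ∀ φ : ℝ × ℝ → ℝ, TestFun φ → Disjoint (tsupport φ) (Gam y) →
     0 ≤ interiorTerm f ρ κ φ + initTerm ρo κ φ) ∧
  HasTraces y ρ ρm ρp ∧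
  (∀ᵐ t ∂(volume.restrict (Ioi (0:ℝ))), (ρm t, ρp t) ∈ Germ f (deriv y t) (q t))

section Auxiliary

open scoped ContDiff NNReal

/-! ### Bounds on admissible pairs and regularity of the interface -/

theorem bell_lip {f : ℝ → ℝ} {ρb : ℝ} (hf : BellShaped f ρb) :
    ∃ K : ℝ≥0, LipschitzOnWith K f (Icc 0 1) := by
  have h1 : ContDiffOn ℝ 1 f (Icc 0 1) := hf.smooth.of_le (by norm_num)
  obtain ⟨K, hK⟩ := h1.exists_lipschitzOnWith (by norm_num) (convex_Icc 0 1) isCompact_Icc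
  exact ⟨K, hK⟩

/-- An admissible pair is bounded by the Lipschitz constant of the flux: since `f` vanishes at both
ends, the bounds `max 0 (-s) ≤ q < max F_s` prevent a steep line. In particular the interface,
only assumed locally Lipschitz on `(0,∞)`, has speed at most `K`, and every integrand along it is
bounded. -/
theorem adm_bounds {f : ℝ → ℝ} {K : ℝ≥0} (hK : LipschitzOnWith K f (Icc 0 1)) (h0 : f 0 = 0)
    (h1 : f 1 = 0) {s q : ℝ} (h : AdmissiblePair f s q) : |s| ≤ K ∧ |q| ≤ 2 * K := by
  have hl : ∀ r ∈ Icc (0:ℝ) 1, |f r| ≤ K * r ∧ |f r| ≤ K * (1 - r) := by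
    intro r hr
    have a := hK.dist_le_mul r hr 0 (by simp)
    have b := hK.dist_le_mul r hr 1 (by simp)
    rw [Real.dist_eq, Real.dist_eq, h0] at a
    rw [Real.dist_eq, Real.dist_eq, h1] at b
    rw [sub_zero, sub_zero, abs_of_nonneg hr.1] at a
    rw [sub_zero, abs_sub_comm, abs_of_nonneg (by linarith [hr.2] : 0 ≤ 1 - r)] at b
    exact ⟨a, b⟩
  have hq : ∀ q, q < maxFlx f s → ∃ r ∈ Icc (0:ℝ) 1, q < f r - s * r := by
    intro q hq
    obtain ⟨_, ⟨r, hr, rfl⟩, h⟩ := exists_lt_of_lt_csSup (by simp) hq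
    exact ⟨r, hr, h⟩
  have hKn : (0:ℝ) ≤ K := K.2
  rcases h with ⟨hs, hq0, h⟩ | ⟨hs, hq0, h⟩
  · obtain ⟨r, hr, h⟩ := hq _ h
    have := (abs_le.1 (hl r hr).1).2
    have hs' : s ≤ K := by
      by_contra! hc
      nlinarith [mul_le_mul_of_nonneg_right hc.le hr.1]
    refine ⟨abs_le.2 ⟨by linarith, hs'⟩, abs_le.2 ⟨by linarith, ?_⟩⟩
    nlinarith [hr.1, hr.2]
  · obtain ⟨r, hr, h⟩ := hq _ h
    have := (abs_le.1 (hl r hr).2).2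
    have hs' : -s ≤ K := by
      by_contra! hc
      nlinarith [mul_le_mul_of_nonneg_right hc.le (by linarith [hr.2] : 0 ≤ 1 - r)]
    refine ⟨abs_le.2 ⟨by linarith, by linarith⟩, abs_le.2 ⟨by linarith, ?_⟩⟩
    nlinarith [hr.1, hr.2, mul_nonneg (by linarith : 0 ≤ K + s) hr.1,
      mul_nonneg hKn (by linarith [hr.2] : 0 ≤ 1 - r)]

/-- The extended curve `Y` provides a starting point `Y 0` of the interface, whereas the value of
`y` at `0` is unconstrained. -/
theorem lip_of_deriv_bound {y : ℝ → ℝ} (hy : LocLip y) {K : ℝ≥0}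
    (hd : ∀ᵐ t ∂(volume.restrict (Ioi (0:ℝ))), |deriv y t| ≤ K) :
    ∃ Y : ℝ → ℝ, LipschitzWith K Y ∧ EqOn y Y (Ioi 0) := by
  have key : LipschitzOnWith K y (Ioi 0) := by
    have main : ∀ a b : ℝ, 0 < a → a ≤ b → |y b - y a| ≤ K * |b - a| := by
      intro a b ha hab
      obtain ⟨C, hC⟩ := hy (Icc a b) isCompact_Icc (fun x hx => lt_of_lt_of_le ha hx.1)
      rw [← uIcc_of_le hab] at hC
      rw [← hC.absolutelyContinuousOnInterval.integral_deriv_eq_sub, ← Real.norm_eq_abs]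
      refine intervalIntegral.norm_integral_le_of_norm_le_const_ae ?_
      rw [ae_restrict_iff' measurableSet_Ioi] at hd
      filter_upwards [hd] with t ht ht'
      rw [uIoc_of_le hab] at ht'
      exact ht (ha.trans ht'.1)
    refine LipschitzOnWith.of_dist_le_mul fun a ha b hb => ?_
    rw [Real.dist_eq, Real.dist_eq]
    rcases le_total a b with h | h
    · rw [abs_sub_comm, abs_sub_comm a b]; exact main a b ha h
    · exact main b a hb h
  exact key.extend_real

/-- The curve `Z n` is obtained by integrating mollifications of the derivative of `Y`. Thus the
slopes keep the bound `K` and converge almost everywhere, and the curves converge uniformly on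
compact time intervals. -/
theorem smooth_approx {Y : ℝ → ℝ} {K : ℝ≥0} (hY : LipschitzWith K Y) :
    ∃ Z : ℕ → ℝ → ℝ, (∀ n, ContDiff ℝ ∞ (Z n)) ∧ (∀ n, Z n 0 = Y 0) ∧
      (∀ n t, |deriv (Z n) t| ≤ K) ∧
      (∀ᵐ t, Tendsto (fun n => deriv (Z n) t) atTop (𝓝 (deriv Y t))) ∧
      ∀ T δ : ℝ, 0 < δ → ∀ᶠ n in atTop, ∀ t ∈ Icc 0 T, |Z n t - Y t| ≤ δ := by
  set h : ℝ → ℝ := deriv Y with hh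
  have hm : Measurable h := measurable_deriv Y
  have hb : ∀ t, |h t| ≤ K := fun t => norm_deriv_le_of_lipschitz hY
  have hloc : LocallyIntegrable h volume := by
    refine (locallyIntegrable_const (K:ℝ)).mono hm.aestronglyMeasurable ?_
    filter_upwards with t
    simpa using hb t
  let B : ℕ → ContDiffBump (0:ℝ) := fun n =>
    ⟨1 / (n + 1), 2 / (n + 1), by positivity, by gcongr; norm_num⟩
  have hB : Tendsto (fun n => (B n).rOut) atTop (𝓝 0) := by
    have := (tendsto_one_div_add_atTop_nhds_zero_nat (𝕜 := ℝ)).const_mul 2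
    simp only [mul_zero] at this
    refine this.congr fun n => ?_
    simp only [B]; ring
  let g : ℕ → ℝ → ℝ := fun n =>
    MeasureTheory.convolution ((B n).normed volume) h (ContinuousLinearMap.lsmul ℝ ℝ) volume
  have hg_lim : ∀ᵐ t, Tendsto (fun n => g n t) atTop (𝓝 (h t)) := by
    refine ContDiffBump.ae_convolution_tendsto_right_of_locallyIntegrable (K := 2) hB ?_ hloc
    filter_upwards with n
    simp only [B]; apply le_of_eq; ring
  have hg_smooth : ∀ n, ContDiff ℝ ∞ (g n) := fun n =>
    (B n).hasCompactSupport_normed.contDiff_convolution_left _ (B n).contDiff_normed hloc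
  have hg_bd : ∀ n t, |g n t| ≤ K := by
    intro n t
    have := dist_convolution_le (μ := volume) (f := (B n).normed volume) (g := h) (x₀ := t)
      (z₀ := 0) (ε := K) (R := (B n).rOut) K.2 (B n).support_normed_eq.subset
      (fun x => (B n).nonneg_normed x)
      (B n).integral_normed hm.aestronglyMeasurable (fun x _ => by simpa using hb x)
    simpa [g] using this
  have hZd : ∀ n t, HasDerivAt (fun t => Y 0 + ∫ s in (0:ℝ)..t, g n s) (g n t) t := fun n t =>
    ((hg_smooth n).continuous.integral_hasStrictDerivAt 0 t).hasDerivAt.const_add _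
  have hZd' : ∀ n, deriv (fun t => Y 0 + ∫ s in (0:ℝ)..t, g n s) = g n := fun n =>
    funext fun t => (hZd n t).deriv
  refine ⟨fun n t => Y 0 + ∫ s in (0:ℝ)..t, g n s, fun n => ?_, fun n => by simp, ?_, ?_, ?_⟩
  · rw [contDiff_infty_iff_deriv, hZd']
    exact ⟨fun t => (hZd n t).differentiableAt, hg_smooth n⟩
  · intro n t; rw [hZd']; exact hg_bd n t
  · filter_upwards [hg_lim] with t ht
    simpa only [hZd'] using ht
  · intro T δ hδ
    have hint : ∀ a b, IntervalIntegrable h volume a b := fun a b =>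
      intervalIntegrable_iff.2 ((hloc.integrableOn_isCompact isCompact_uIcc).mono_set
        uIoc_subset_uIcc)
    have hintg : ∀ n a b, IntervalIntegrable (g n) volume a b := fun n a b =>
      (hg_smooth n).continuous.intervalIntegrable _ _
    have lim : Tendsto (fun n => ∫ s in Ioc 0 T, |g n s - h s|) atTop (𝓝 0) := by
      have := tendsto_integral_of_dominated_convergence (μ := volume.restrict (Ioc 0 T))
        (F := fun n s => |g n s - h s|) (f := fun _ => 0) (fun _ => (2 * K : ℝ)) (fun n =>
          (((hg_smooth n).continuous.measurable.sub hm).abs).aestronglyMeasurable)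
        (integrable_const _) (fun n => ?_) ?_
      · simpa using this
      · filter_upwards with s
        rw [Real.norm_eq_abs, abs_abs]
        calc _ ≤ |g n s| + |h s| := abs_sub _ _
          _ ≤ _ := by linarith [hg_bd n s, hb s]
      · filter_upwards [ae_restrict_of_ae hg_lim] with s hs
        simpa using (hs.sub_const (h s)).abs
    filter_upwards [lim.eventually (ge_mem_nhds hδ)] with n hn t ht
    have hYt : Y t = Y 0 + ∫ s in (0:ℝ)..t, h s := by
      rw [(hY.lipschitzOnWith (s := uIcc 0 t)).absolutelyContinuousOnInterval.integral_deriv_eq_sub]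
      ring
    rw [hYt, add_sub_add_left_eq_sub, ← intervalIntegral.integral_sub (hintg n 0 t) (hint 0 t),
      intervalIntegral.integral_of_le ht.1]
    refine (abs_integral_le_integral_abs).trans (le_trans ?_ hn)
    refine setIntegral_mono_set ?_ ?_ ?_
    · have := (intervalIntegrable_iff_integrableOn_Ioc_of_le (ht.1.trans ht.2)).1
        ((hintg n 0 T).sub (hint 0 T))
      exact this.abs
    · filter_upwards with s using abs_nonneg _
    · exact (Ioc_subset_Ioc_right ht.2).eventuallyLE

/-! ### The entropy flux and the germ -/

theorem sign_mul_self' (x : ℝ) : Real.sign x * x = |x| := by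
  rcases lt_trichotomy x 0 with h | h | h
  · rw [Real.sign_of_neg h, abs_of_neg h]; ring
  · simp [h]
  · rw [Real.sign_of_pos h, abs_of_pos h]; ring

theorem EFlx_eq (f : ℝ → ℝ) (s r κ : ℝ) : EFlx f s r κ = EFlx f 0 r κ - s * |r - κ| := by
  rw [← sign_mul_self']; simp only [EFlx, Flx]; ring

theorem EFlx_lip {g : ℝ → ℝ} {K : ℝ≥0} (hg : LipschitzWith K g) (κ : ℝ) :
    LipschitzWith K (fun r => EFlx g 0 r κ) := by
  have hl : ∀ a b, a ≤ b → |g b - g a| ≤ K * (b - a) := by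
    intro a b hab
    have := hg.dist_le_mul b a
    rwa [Real.dist_eq, Real.dist_eq, abs_of_nonneg (sub_nonneg.2 hab)] at this
  have key : ∀ a b, a ≤ b → |EFlx g 0 a κ - EFlx g 0 b κ| ≤ K * (b - a) := by
    intro a b hab
    simp only [EFlx, Flx, zero_mul, sub_zero]
    rcases lt_trichotomy a κ with ha | ha | ha
    · rcases lt_trichotomy b κ with hb | hb | hb
      · rw [Real.sign_of_neg (sub_neg.2 ha), Real.sign_of_neg (sub_neg.2 hb)]
        convert hl a b hab using 2; ring
      · subst hb
        rw [Real.sign_of_neg (sub_neg.2 ha)]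
        convert hl a b hab using 2; simp
      · rw [Real.sign_of_neg (sub_neg.2 ha), Real.sign_of_pos (sub_pos.2 hb)]
        have h1 := abs_le.1 (hl a κ ha.le)
        have h2 := abs_le.1 (hl κ b hb.le)
        rw [abs_le]; constructor <;> nlinarith
    · subst ha
      rcases hab.eq_or_lt with rfl | hb
      · simp
      · rw [Real.sign_of_pos (sub_pos.2 hb), abs_sub_comm]
        convert hl a b hab using 2; simp
    · have hb := ha.trans_le hab
      rw [Real.sign_of_pos (sub_pos.2 ha), Real.sign_of_pos (sub_pos.2 hb), abs_sub_comm]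
      convert hl a b hab using 2; ring
  refine LipschitzWith.of_dist_le_mul fun a b => ?_
  rw [Real.dist_eq, Real.dist_eq]
  rcases le_total a b with h | h
  · rw [abs_sub_comm a b, abs_of_nonneg (sub_nonneg.2 h)]; exact key a b h
  · rw [abs_sub_comm, abs_of_nonneg (sub_nonneg.2 h)]; exact key b a h

/-- The algebraic property of the germ: the jump of the entropy flux across the interface is at
most the remainder. The only case using concavity of `F_s` is that of a jump `a < κ < b` with
`F_s a = F_s b`, where it yields `F_s a ≤ F_s κ`. -/
theorem germ_ineq {f : ℝ → ℝ} (hf : ConcaveOn ℝ (Icc 0 1) f) {s q κ a b : ℝ}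
    (h : (a, b) ∈ Germ f s q) : EFlx f s b κ - EFlx f s a κ ≤ Rem f s κ q := by
  obtain ⟨ha, hb, h⟩ := h
  simp only at ha hb h
  have hF : ∀ x ∈ Icc (0:ℝ) 1, ∀ y ∈ Icc (0:ℝ) 1, x ≤ κ → κ ≤ y →
      min (Flx f s x) (Flx f s y) ≤ Flx f s κ := by
    intro x hx y hy h1 h2
    have hc : ConcaveOn ℝ (Icc 0 1) (Flx f s) := by
      refine ⟨convex_Icc 0 1, fun x hx y hy α β hα hβ hαβ => ?_⟩
      have := hf.2 hx hy hα hβ hαβ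
      simp only [Flx, smul_eq_mul] at this ⊢
      linarith
    exact hc.min_le_of_mem_Icc hx hy ⟨h1, h2⟩
  have hR : 0 ≤ Rem f s κ q := by
    unfold Rem; linarith [min_le_left (Flx f s κ) q]
  have hR2 : 2 * (Flx f s κ - q) ≤ Rem f s κ q := by
    unfold Rem; linarith [min_le_right (Flx f s κ) q]
  rcases h with ⟨hba, h1, h2⟩ | ⟨rfl, h⟩ | ⟨hab, h1, h2⟩
  · simp only [EFlx, h1, h2]
    rcases le_or_gt κ b with hκ | hκ
    · rcases hκ.eq_or_lt with rfl | hκ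
      · simpa [h2] using hR
      · rw [Real.sign_of_pos (sub_pos.2 hκ), Real.sign_of_pos (by linarith)]; linarith
    · rw [Real.sign_of_neg (sub_neg.2 hκ)]
      rcases lt_trichotomy a κ with hk | hk | hk
      · rw [Real.sign_of_neg (sub_neg.2 hk)]; linarith
      · subst hk; simpa [h1] using hR
      · rw [Real.sign_of_pos (sub_pos.2 hk)]; linarith
  · simpa using hR
  · simp only [EFlx, h1] at h2 ⊢
    rcases lt_trichotomy a κ with hk | hk | hk
    · rw [Real.sign_of_neg (sub_neg.2 hk)]
      rcases lt_trichotomy b κ with hk' | hk' | hk'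
      · rw [Real.sign_of_neg (sub_neg.2 hk')]; linarith
      · subst hk'; simpa using hR
      · rw [Real.sign_of_pos (sub_pos.2 hk')]
        have := hF a ha b hb hk.le hk'.le
        rw [h1, min_self] at this
        linarith
    · subst hk; simpa [h1] using hR
    · rw [Real.sign_of_pos (sub_pos.2 hk), Real.sign_of_pos (by linarith)]; linarith

/-! ### Cut-off profiles and integration of test functions -/

/-- A smooth profile vanishing near `0` and equal to `a` on the far left, `b` on the far right. -/
theorem exists_profile {a b : ℝ} (ha : a ∈ Icc (0:ℝ) 1) (hb : b ∈ Icc (0:ℝ) 1) :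
    ∃ θ : ℝ → ℝ, ContDiff ℝ ∞ θ ∧ (∀ z, 0 ≤ θ z ∧ θ z ≤ 1) ∧ (∀ z, |z| ≤ 1 / 2 → θ z = 0) ∧
      (∀ z, 1 ≤ z → θ z = b) ∧ (∀ z, z ≤ -1 → θ z = a) := by
  refine ⟨fun z => b * Real.smoothTransition (2 * z - 1) + a * Real.smoothTransition (-2 * z - 1),
    ?_, ?_, ?_, ?_, ?_⟩
  · have h : ContDiff ℝ ∞ Real.smoothTransition := Real.smoothTransition.contDiff
    exact (contDiff_const.mul (h.comp (by fun_prop))).add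
      (contDiff_const.mul (h.comp (by fun_prop)))
  · intro z
    have h1 := Real.smoothTransition.nonneg (2 * z - 1)
    have h2 := Real.smoothTransition.nonneg (-2 * z - 1)
    have h3 := Real.smoothTransition.le_one (2 * z - 1)
    have h4 := Real.smoothTransition.le_one (-2 * z - 1)
    refine ⟨add_nonneg (mul_nonneg hb.1 h1) (mul_nonneg ha.1 h2), ?_⟩
    rcases le_total z 0 with hz | hz
    · beta_reduce
      rw [Real.smoothTransition.zero_of_nonpos (by linarith : 2 * z - 1 ≤ 0)]
      nlinarith [ha.1, ha.2]
    · beta_reduce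
      rw [Real.smoothTransition.zero_of_nonpos (by linarith : -2 * z - 1 ≤ 0)]
      nlinarith [hb.1, hb.2]
  · intro z hz
    have := abs_le.1 hz
    simp only
    rw [Real.smoothTransition.zero_of_nonpos (by linarith : 2 * z - 1 ≤ 0),
      Real.smoothTransition.zero_of_nonpos (by linarith : -2 * z - 1 ≤ 0)]
    simp
  · intro z hz
    simp only
    rw [Real.smoothTransition.one_of_one_le (by linarith : 1 ≤ 2 * z - 1),
      Real.smoothTransition.zero_of_nonpos (by linarith : -2 * z - 1 ≤ 0)]
    simp
  · intro z hz
    simp only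
    rw [Real.smoothTransition.zero_of_nonpos (by linarith : 2 * z - 1 ≤ 0),
      Real.smoothTransition.one_of_one_le (by linarith : 1 ≤ -2 * z - 1)]
    simp

/-- The square `[-R, R]²`. -/
def box (R : ℝ) : Set (ℝ × ℝ) := Icc (-R) R ×ˢ Icc (-R) R

/-- Lebesgue measure on `{t > 0}`, with coordinates ordered as `(t, x)`. -/
def htx : Measure (ℝ × ℝ) := (volume.restrict (Ioi (0:ℝ))).prod volume

instance instSFiniteHtx : SFinite htx := by unfold htx; infer_instance

theorem box_integrable (R C : ℝ) : Integrable ((box R).indicator fun _ => C) htx := by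
  have hm : MeasurableSet (box R) := measurableSet_Icc.prod measurableSet_Icc
  rw [integrable_indicator_iff hm]
  refine integrableOn_const ?_
  unfold htx box
  rw [Measure.prod_prod]
  refine (ENNReal.mul_lt_top ?_ ?_).ne
  · exact (Measure.restrict_apply_le _ _).trans_lt measure_Icc_lt_top
  · exact measure_Icc_lt_top

theorem integrable_of_box {F : ℝ × ℝ → ℝ} {R C : ℝ} (hF : AEStronglyMeasurable F htx)
    (hC : ∀ p, |F p| ≤ C) (h0 : ∀ p, p ∉ box R → F p = 0) : Integrable F htx := by
  refine (box_integrable R C).mono' hF (ae_of_all _ fun p => ?_)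
  by_cases hp : p ∈ box R
  · simpa [hp] using hC p
  · simp [hp, h0 p hp]

/-- Dominated convergence for uniformly bounded functions vanishing outside a common box. -/
theorem tendsto_of_box {ι : Type*} {l : Filter ι} [l.IsCountablyGenerated]
    {F : ι → ℝ × ℝ → ℝ} {G : ℝ × ℝ → ℝ} {R C : ℝ}
    (hF : ∀ᶠ i in l, AEStronglyMeasurable (F i) htx) (hC : ∀ᶠ i in l, ∀ p, |F i p| ≤ C)
    (h0 : ∀ i, ∀ p, p ∉ box R → F i p = 0)
    (hlim : ∀ᵐ p ∂htx, Tendsto (fun i => F i p) l (𝓝 (G p))) :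
    Tendsto (fun i => ∫ p, F i p ∂htx) l (𝓝 (∫ p, G p ∂htx)) := by
  refine tendsto_integral_filter_of_dominated_convergence ((box R).indicator fun _ => C) hF ?_
    (box_integrable R C) hlim
  filter_upwards [hC] with i hi
  refine ae_of_all _ fun p => ?_
  by_cases hp : p ∈ box R
  · simpa [hp] using hi p
  · simp [hp, h0 i p hp]

/-- Uniform bounds for a test function and its first derivatives. The box has coordinates ordered as
`(t, x)`, as for `htx`, while `φ` takes `(x, t)`. -/
theorem testFun_data {φ : ℝ × ℝ → ℝ} (hφ : TestFun φ) :
    Continuous (pT φ) ∧ Continuous (pX φ) ∧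
    ∃ R M : ℝ, 0 < R ∧ 0 ≤ M ∧ (∀ p, |φ p| ≤ M ∧ |pT φ p| ≤ M ∧ |pX φ p| ≤ M) ∧
      (∀ x t, (t, x) ∉ box R → φ (x, t) = 0 ∧ pT φ (x, t) = 0 ∧ pX φ (x, t) = 0) := by
  obtain ⟨hs, hc, -⟩ := hφ
  have hd : Continuous (fderiv ℝ φ) := hs.continuous_fderiv (by simp)
  have h1 : Continuous (pT φ) := hd.clm_apply continuous_const
  have h2 : Continuous (pX φ) := hd.clm_apply continuous_const
  have c1 : HasCompactSupport (pT φ) := hc.fderiv_apply ℝ _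
  have c2 : HasCompactSupport (pX φ) := hc.fderiv_apply ℝ _
  obtain ⟨M0, hM0⟩ := hc.exists_bound_of_continuous hs.continuous
  obtain ⟨M1, hM1⟩ := c1.exists_bound_of_continuous h1
  obtain ⟨M2, hM2⟩ := c2.exists_bound_of_continuous h2
  obtain ⟨R, hR0, hR⟩ := hc.isCompact.isBounded.subset_closedBall_lt 0 (0 : ℝ × ℝ)
  refine ⟨h1, h2, R, max M0 (max M1 M2), hR0, ?_, ?_, ?_⟩
  · exact (norm_nonneg _).trans ((hM0 0).trans (le_max_left _ _))
  · intro p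
    exact ⟨(hM0 p).trans (le_max_left _ _),
      (hM1 p).trans ((le_max_left _ _).trans (le_max_right _ _)),
      (hM2 p).trans ((le_max_right _ _).trans (le_max_right _ _))⟩
  · intro x t h
    have hn : (x, t) ∉ tsupport φ := by
      intro h'
      apply h
      have := hR h'
      rw [mem_closedBall_zero_iff, Prod.norm_def, max_le_iff, Real.norm_eq_abs, Real.norm_eq_abs,
        abs_le, abs_le] at this
      exact ⟨this.2, this.1⟩
    have hf : fderiv ℝ φ (x, t) = 0 := by
      by_contra hne
      exact hn (support_fderiv_subset ℝ hne)
    refine ⟨image_eq_zero_of_notMem_tsupport hn, ?_, ?_⟩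
    · simp [pT, hf]
    · simp [pX, hf]

/-! ### The entropy inequality for cut-off test functions -/

/-- The integrand `P ∂ₜψ + Q ∂ₓψ` for the test function `ψ(x,t) = φ(x,t) η(x - Z(t))`, after
expanding the derivatives of the product. The point `p` has coordinates `(t, x)`, whereas `P`, `Q`
and `φ` take `(x, t)`. The expression only involves the derivative of `Z`, so it also makes sense
almost everywhere for a Lipschitz `Z`, for which `ψ` is not smooth. -/
def cutInt (P Q φ : ℝ × ℝ → ℝ) (η Z : ℝ → ℝ) (p : ℝ × ℝ) : ℝ :=
  η (p.2 - Z p.1) * (P p.swap * pT φ p.swap + Q p.swap * pX φ p.swap) +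
    φ p.swap * deriv η (p.2 - Z p.1) * (Q p.swap - deriv Z p.1 * P p.swap)

theorem partials_cut {φ : ℝ × ℝ → ℝ} (hφ : Differentiable ℝ φ) {η Z : ℝ → ℝ}
    (hη : Differentiable ℝ η) (hZ : Differentiable ℝ Z) (x t : ℝ) :
    pT (fun p => φ p * η (p.1 - Z p.2)) (x, t) =
      pT φ (x, t) * η (x - Z t) - φ (x, t) * deriv η (x - Z t) * deriv Z t ∧
    pX (fun p => φ p * η (p.1 - Z p.2)) (x, t) =
      pX φ (x, t) * η (x - Z t) + φ (x, t) * deriv η (x - Z t) := by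
  have h1 : HasFDerivAt (fun p : ℝ × ℝ => p.1 - Z p.2)
      (ContinuousLinearMap.fst ℝ ℝ ℝ - deriv Z t • ContinuousLinearMap.snd ℝ ℝ ℝ) (x, t) :=
    hasFDerivAt_fst.sub
      (HasDerivAt.comp_hasFDerivAt (x, t) (f := Prod.snd) (hZ t).hasDerivAt hasFDerivAt_snd)
  have h2 : HasFDerivAt (fun p : ℝ × ℝ => η (p.1 - Z p.2)) (deriv η (x - Z t) •
      (ContinuousLinearMap.fst ℝ ℝ ℝ - deriv Z t • ContinuousLinearMap.snd ℝ ℝ ℝ)) (x, t) :=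
    HasDerivAt.comp_hasFDerivAt (x, t) (f := fun p : ℝ × ℝ => p.1 - Z p.2)
      (hη (x - Z t)).hasDerivAt h1
  have h3 := (hφ (x, t)).hasFDerivAt.mul h2
  unfold pT pX
  rw [show (fun p => φ p * η (p.1 - Z p.2)) = φ * (fun p : ℝ × ℝ => η (p.1 - Z p.2)) from rfl,
    h3.fderiv]
  constructor <;> simp <;> ring

theorem testFun_cut {φ : ℝ × ℝ → ℝ} (hφ : TestFun φ) {η Z : ℝ → ℝ} (hη : ContDiff ℝ ∞ η)
    (hη0 : ∀ z, 0 ≤ η z) (hZ : ContDiff ℝ ∞ Z) :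
    TestFun (fun p => φ p * η (p.1 - Z p.2)) := by
  refine ⟨?_, hφ.2.1.mul_right, fun p => mul_nonneg (hφ.2.2 p) (hη0 _)⟩
  exact hφ.1.mul (hη.comp (contDiff_fst.sub (hZ.comp contDiff_snd)))

theorem cutInt_bound {P Q φ : ℝ × ℝ → ℝ} {η Z : ℝ → ℝ} {M D K : ℝ} {p : ℝ × ℝ} (hM : 0 ≤ M)
    (hD : 0 ≤ D) (hK : 0 ≤ K)
    (hP : |P p.swap| ≤ 1) (hQ : |Q p.swap| ≤ K)
    (hφ : |φ p.swap| ≤ M ∧ |pT φ p.swap| ≤ M ∧ |pX φ p.swap| ≤ M)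
    (hη : ∀ z, |η z| ≤ 1) (hη' : ∀ z, |deriv η z| ≤ D) (hZ : |deriv Z p.1| ≤ K) :
    |cutInt P Q φ η Z p| ≤ M + K * M + M * D * (2 * K) := by
  obtain ⟨h1, h2, h3⟩ := hφ
  unfold cutInt
  have e1 : |P p.swap * pT φ p.swap + Q p.swap * pX φ p.swap| ≤ 1 * M + K * M := by
    refine (abs_add_le _ _).trans ?_
    rw [abs_mul, abs_mul]
    gcongr
  have e2 : |Q p.swap - deriv Z p.1 * P p.swap| ≤ 2 * K := by
    refine (abs_sub _ _).trans ?_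
    rw [abs_mul]
    nlinarith [abs_nonneg (deriv Z p.1), abs_nonneg (P p.swap)]
  refine (abs_add_le _ _).trans ?_
  rw [abs_mul, abs_mul, abs_mul]
  have : |η (p.2 - Z p.1)| * |P p.swap * pT φ p.swap + Q p.swap * pX φ p.swap| ≤
      1 * (1 * M + K * M) := by
    gcongr; exact hη _
  have h4 : |φ p.swap| * |deriv η (p.2 - Z p.1)| * |Q p.swap - deriv Z p.1 * P p.swap| ≤
      M * D * (2 * K) := by
    gcongr; exact hη' _
  linarith

theorem cutInt_meas {P Q φ : ℝ × ℝ → ℝ} {η Z : ℝ → ℝ} (hP : Measurable P) (hQ : Measurable Q)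
    (hφ : TestFun φ) (hη : ContDiff ℝ ∞ η) (hZ : Continuous Z) : Measurable (cutInt P Q φ η Z) := by
  obtain ⟨c1, c2, -⟩ := testFun_data hφ
  have c0 : Continuous φ := hφ.1.continuous
  have d : Continuous (deriv η) := hη.continuous_deriv (by simp)
  have m1 : Measurable fun p : ℝ × ℝ => p.2 - Z p.1 :=
    measurable_snd.sub (hZ.measurable.comp measurable_fst)
  unfold cutInt
  exact ((hη.continuous.measurable.comp m1).mul
    (((hP.comp measurable_swap).mul (c1.measurable.comp measurable_swap)).add
      ((hQ.comp measurable_swap).mul (c2.measurable.comp measurable_swap)))).add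
    (((c0.measurable.comp measurable_swap).mul (d.measurable.comp m1)).mul
      ((hQ.comp measurable_swap).sub
        (((measurable_deriv Z).comp measurable_fst).mul (hP.comp measurable_swap))))

/-- The entropy inequality away from the curve extends to the Lipschitz test functions
`φ(x,t) η(x - Y(t))`, where `η` vanishes near `0`: the curve is replaced by its smooth
approximations, whose cut-off test functions are still supported away from `Γ`. -/
theorem ineq_cut {P Q : ℝ × ℝ → ℝ} (hPm : Measurable P) (hQm : Measurable Q) {K : ℝ≥0}
    (hP : ∀ p, |P p| ≤ 1) (hQ : ∀ p, |Q p| ≤ K) {Y : ℝ → ℝ} (hY : LipschitzWith K Y) {i : ℝ → ℝ}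
    (Hsol : ∀ φ, TestFun φ → Disjoint (tsupport φ) (Gam Y) →
      0 ≤ (∫ t in Ioi (0:ℝ), ∫ x, (P (x, t) * pT φ (x, t) + Q (x, t) * pX φ (x, t))) +
        ∫ x, i x * φ (x, 0))
    {φ : ℝ × ℝ → ℝ} (hφ : TestFun φ) {η : ℝ → ℝ} (hη : ContDiff ℝ ∞ η)
    (hη0 : ∀ z, 0 ≤ η z ∧ η z ≤ 1) {D δ : ℝ} (hD0 : 0 ≤ D) (hD : ∀ z, |deriv η z| ≤ D)
    (hδ : 0 < δ) (hηδ : ∀ z, |z| ≤ δ → η z = 0) :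
    0 ≤ (∫ p, cutInt P Q φ η Y p ∂htx) + ∫ x, i x * (φ (x, 0) * η (x - Y 0)) := by
  obtain ⟨Z, hZs, hZ0, hZK, hZlim, hZunif⟩ := smooth_approx hY
  obtain ⟨c1, c2, R, M, hR, hM, hb, h0⟩ := testFun_data hφ
  have hη1 : ∀ z, |η z| ≤ 1 := fun z => by rw [abs_of_nonneg (hη0 z).1]; exact (hη0 z).2
  have hzero : ∀ Z : ℝ → ℝ, ∀ p, p ∉ box R → cutInt P Q φ η Z p = 0 := by
    rintro Z ⟨t, x⟩ hp
    obtain ⟨e1, e2, e3⟩ := h0 x t hp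
    simp [cutInt, e1, e2, e3]
  have hbound : ∀ n p, |cutInt P Q φ η (Z n) p| ≤ M + K * M + M * D * (2 * K) := fun n p =>
    cutInt_bound hM hD0 K.2 (hP _) (hQ _) (hb _) hη1 hD (hZK n _)
  have hmeas : ∀ n, AEStronglyMeasurable (cutInt P Q φ η (Z n)) htx := fun n =>
    (cutInt_meas hPm hQm hφ hη (hZs n).continuous).aestronglyMeasurable
  have hZY : ∀ t, 0 ≤ t → Tendsto (fun n => Z n t) atTop (𝓝 (Y t)) := by
    intro t ht
    rw [Metric.tendsto_nhds]
    intro e he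
    filter_upwards [hZunif t (e / 2) (by positivity)] with n hn
    rw [Real.dist_eq]
    linarith [hn t ⟨ht, le_rfl⟩]
  have hlim : Tendsto (fun n => ∫ p, cutInt P Q φ η (Z n) p ∂htx) atTop
      (𝓝 (∫ p, cutInt P Q φ η Y p ∂htx)) := by
    refine tendsto_of_box (R := R) (C := M + K * M + M * D * (2 * K))
      (Eventually.of_forall hmeas) (Eventually.of_forall hbound) (fun n => hzero _) ?_
    have hae : ∀ᵐ t ∂(volume.restrict (Ioi (0:ℝ))), Tendsto (fun n => Z n t) atTop (𝓝 (Y t)) ∧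
        Tendsto (fun n => deriv (Z n) t) atTop (𝓝 (deriv Y t)) := by
      filter_upwards [ae_restrict_of_ae hZlim, ae_restrict_mem measurableSet_Ioi] with t h1 h2
      exact ⟨hZY t (le_of_lt h2), h1⟩
    have hae' : ∀ᵐ p ∂htx, Tendsto (fun n => Z n p.1) atTop (𝓝 (Y p.1)) ∧
        Tendsto (fun n => deriv (Z n) p.1) atTop (𝓝 (deriv Y p.1)) :=
      Measure.quasiMeasurePreserving_fst.ae hae
    filter_upwards [hae'] with p hp
    have d : Continuous (deriv η) := hη.continuous_deriv (by simp)
    have l1 := (hη.continuous.tendsto _).comp (hp.1.const_sub p.2)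
    have l2 := (d.tendsto _).comp (hp.1.const_sub p.2)
    exact (l1.mul_const _).add ((l2.const_mul _).mul ((hp.2.mul_const _).const_sub _))
  refine le_of_tendsto_of_tendsto tendsto_const_nhds (hlim.add_const _) ?_
  filter_upwards [hZunif R (δ / 2) (by positivity)] with n hn
  -- on the support of `φ`, the curve `Z n` is `δ / 2`-close to `Y`, and `η z = 0` if `|z| ≤ δ`
  have hdisj : Disjoint (tsupport fun p : ℝ × ℝ => φ p * η (p.1 - Z n p.2)) (Gam Y) := by
    rw [Set.disjoint_left]
    rintro _ hp ⟨t, ht, rfl⟩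
    have hcl : IsClosed {p : ℝ × ℝ | p.2 ≤ R ∧ δ ≤ |p.1 - Z n p.2|} :=
      (isClosed_le continuous_snd continuous_const).inter
        (isClosed_le continuous_const
          ((continuous_fst.sub ((hZs n).continuous.comp continuous_snd)).abs))
    have hsub : (Function.support fun p : ℝ × ℝ => φ p * η (p.1 - Z n p.2)) ⊆
        {p : ℝ × ℝ | p.2 ≤ R ∧ δ ≤ |p.1 - Z n p.2|} := by
      rintro ⟨x, s⟩ hs
      constructor
      · by_contra hc
        apply hs
        simp only
        rw [(h0 x s (fun hb => hc hb.1.2)).1, zero_mul]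
      · by_contra! hc
        apply hs
        simp only
        rw [hηδ _ hc.le, mul_zero]
    obtain ⟨q1, q2⟩ := closure_minimal hsub hcl hp
    simp only at q1 q2
    have := hn t ⟨ht.le, q1⟩
    rw [abs_sub_comm] at this
    linarith
  have := Hsol _ (testFun_cut hφ hη (fun z => (hη0 z).1) (hZs n)) hdisj
  simp only [hZ0] at this
  refine this.trans_eq ?_
  congr 1
  symm
  have hint : Integrable (cutInt P Q φ η (Z n)) htx :=
    integrable_of_box (hmeas n) (hbound n) (hzero _)
  unfold htx at hint ⊢
  rw [integral_prod _ hint]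
  congr 1
  ext t
  congr 1
  ext x
  obtain ⟨e1, e2⟩ := partials_cut (hφ.1.differentiable (by simp)) (hη.differentiable (by simp))
    ((hZs n).differentiable (by simp)) x t
  rw [e1, e2]
  simp only [cutInt, Prod.swap_prod_mk]
  ring

/-! ### Fluxes through shifted interfaces -/

/-- The normal entropy flux `E(r) - s |r - κ|` through a line of slope `s`, where `E` stands for
the Kruzhkov flux `Φ(·, κ)`. -/
def nflux (E : ℝ → ℝ) (κ r s : ℝ) : ℝ := E r - s * |r - κ|

theorem nflux_lip {E : ℝ → ℝ} {K : ℝ≥0} (hE : LipschitzWith K E) (κ : ℝ) {s : ℝ} (hs : |s| ≤ K)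
    (r r' : ℝ) : |nflux E κ r s - nflux E κ r' s| ≤ 2 * K * |r - r'| := by
  have h1 : |E r - E r'| ≤ K * |r - r'| := hE.dist_le_mul r r'
  have h2 : |s * (|r - κ| - |r' - κ|)| ≤ K * |r - r'| := by
    rw [abs_mul]
    have := abs_abs_sub_abs_le_abs_sub (r - κ) (r' - κ)
    rw [sub_sub_sub_cancel_right] at this
    gcongr
  calc |nflux E κ r s - nflux E κ r' s| = |(E r - E r') - s * (|r - κ| - |r' - κ|)| := by
        unfold nflux; ring_nf
    _ ≤ |E r - E r'| + |s * (|r - κ| - |r' - κ|)| := abs_sub _ _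
    _ ≤ _ := by linarith

theorem nflux_bound {E : ℝ → ℝ} {K : ℝ≥0} (hE : LipschitzWith K E) {κ : ℝ} (hEκ : E κ = 0)
    (hκ : κ ∈ Icc (0:ℝ) 1) {s : ℝ} (hs : |s| ≤ K) {r : ℝ} (hr : r ∈ Icc (0:ℝ) 1) :
    |nflux E κ r s| ≤ 2 * K := by
  have h := nflux_lip hE κ hs r κ
  have h0 : nflux E κ κ s = 0 := by simp [nflux, hEκ]
  rw [h0, sub_zero] at h
  have : |r - κ| ≤ 1 := abs_le.2 ⟨by linarith [hr.1, hκ.2], by linarith [hr.2, hκ.1]⟩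
  have hK : (0:ℝ) ≤ K := K.2
  nlinarith

/-- The total normal entropy flux of `ρ`, weighted by `φ`, through the interface shifted by `ε`
in the space direction. -/
def shiftFlux (E : ℝ → ℝ) (κ : ℝ) (ρ : ℝ → ℝ → ℝ) (Y : ℝ → ℝ) (φ : ℝ × ℝ → ℝ) (ε : ℝ) : ℝ :=
  ∫ t in Ioi (0:ℝ), φ (Y t + ε, t) * nflux E κ (ρ (Y t + ε) t) (deriv Y t)

theorem integral_Ioi_eq_Ioo {F : ℝ → ℝ} {T : ℝ} (h : ∀ t, T ≤ t → F t = 0) :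
    ∫ t in Ioi (0:ℝ), F t = ∫ t in Ioo (0:ℝ) T, F t := by
  refine (setIntegral_eq_of_subset_of_forall_sdiff_eq_zero measurableSet_Ioi
    (fun t ht => ht.1) ?_)
  rintro t ⟨h1, h2⟩
  apply h
  by_contra! hc
  exact h2 ⟨h1, hc⟩

theorem nflux_meas {E : ℝ → ℝ} {K : ℝ≥0} (hE : LipschitzWith K E) (κ : ℝ) {α : Type*}
    [MeasurableSpace α] {r s : α → ℝ} (hr : Measurable r) (hs : Measurable s) :
    Measurable fun t => nflux E κ (r t) (s t) := by
  unfold nflux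
  exact (hE.continuous.measurable.comp hr).sub (hs.mul (hr.sub_const κ).abs)

section Limit

variable {E : ℝ → ℝ} {K : ℝ≥0} {κ : ℝ} {ρ : ℝ → ℝ → ℝ} {Y : ℝ → ℝ} {φ : ℝ × ℝ → ℝ}

theorem shiftFlux_bound (hE : LipschitzWith K E) (hEκ : E κ = 0)
    (hκ : κ ∈ Icc (0:ℝ) 1) (hρ : ∀ x t, ρ x t ∈ Icc (0:ℝ) 1) (hY : LipschitzWith K Y)
    (hφ : TestFun φ) : ∃ C, ∀ ε, |shiftFlux E κ ρ Y φ ε| ≤ C := by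
  obtain ⟨c1, c2, R, M, hR, hM, hb, h0⟩ := testFun_data hφ
  refine ⟨M * (2 * K) * (volume (Ioo (0:ℝ) (R + 1))).toReal, fun ε => ?_⟩
  unfold shiftFlux
  rw [integral_Ioi_eq_Ioo (T := R + 1), ← Real.norm_eq_abs]
  · refine norm_setIntegral_le_of_norm_le_const measure_Ioo_lt_top fun t ht => ?_
    rw [norm_mul]
    gcongr
    · exact (hb _).1
    · exact nflux_bound hE hEκ hκ (norm_deriv_le_of_lipschitz hY) (hρ _ _)
  · intro t ht
    rw [(h0 _ t (fun hc => by linarith [hc.1.2])).1, zero_mul]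

/-- Existence of a strong trace `r` on one side of the interface makes the flux through the shifted
interface converge to the flux of the trace; the side is selected by the filter `l`. -/
theorem shiftFlux_tendsto (hE : LipschitzWith K E) (hEκ : E κ = 0)
    (hκ : κ ∈ Icc (0:ℝ) 1) (hρm : Measurable fun p : ℝ × ℝ => ρ p.1 p.2)
    (hρ : ∀ x t, ρ x t ∈ Icc (0:ℝ) 1) (hY : LipschitzWith K Y)
    (hφ : TestFun φ) {r : ℝ → ℝ} (hrm : Measurable r)
    (hr : ∀ᵐ t ∂(volume.restrict (Ioi (0:ℝ))), r t ∈ Icc (0:ℝ) 1) {l : Filter ℝ} (hl : l ≤ 𝓝 0)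
    (htr : ∀ T : ℝ, 0 < T →
      Tendsto (fun ε : ℝ => ∫ t in Ioo (0:ℝ) T, |ρ (Y t + ε) t - r t|) l (𝓝 0)) :
    Tendsto (shiftFlux E κ ρ Y φ) l
      (𝓝 (∫ t in Ioi (0:ℝ), φ (Y t, t) * nflux E κ (r t) (deriv Y t))) := by
  obtain ⟨c1, c2, R, M, hR, hM, hb, h0⟩ := testFun_data hφ
  obtain ⟨L, hL⟩ := hφ.1.lipschitzWith_of_hasCompactSupport hφ.2.1 (by simp)
  have hs : ∀ t, |deriv Y t| ≤ K := fun t => norm_deriv_le_of_lipschitz hY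
  have hK : (0:ℝ) ≤ K := K.2
  have hL0 : (0:ℝ) ≤ L := L.2
  set T := R + 1 with hT
  have hT0 : 0 < T := by positivity
  have hr' : ∀ᵐ t ∂(volume.restrict (Ioo (0:ℝ) T)), r t ∈ Icc (0:ℝ) 1 :=
    ae_restrict_of_ae_restrict_of_subset (fun t ht => ht.1) hr
  have hmY : ∀ ε, Measurable fun t => Y t + ε := fun ε => hY.continuous.measurable.add_const ε
  have hmρ : ∀ ε, Measurable fun t => ρ (Y t + ε) t := fun ε =>
    hρm.comp ((hmY ε).prodMk measurable_id)
  have hmφ : ∀ ε, Measurable fun t => φ (Y t + ε, t) := fun ε =>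
    hφ.1.continuous.measurable.comp ((hmY ε).prodMk measurable_id)
  have hmφ0 : Measurable fun t => φ (Y t, t) := by simpa using hmφ 0
  -- integrability on `(0,T)`
  have hi1 : ∀ ε, Integrable (fun t => φ (Y t + ε, t) *
      nflux E κ (ρ (Y t + ε) t) (deriv Y t)) (volume.restrict (Ioo (0:ℝ) T)) := by
    intro ε
    refine Integrable.of_bound (C := M * (2 * K)) ((hmφ ε).mul
      (nflux_meas hE κ (hmρ ε) (measurable_deriv Y))).aestronglyMeasurable (ae_of_all _ fun t => ?_)
    rw [norm_mul]
    gcongr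
    · exact (hb _).1
    · exact nflux_bound hE hEκ hκ (hs t) (hρ _ _)
  have hi2 : Integrable (fun t => φ (Y t, t) *
      nflux E κ (r t) (deriv Y t)) (volume.restrict (Ioo (0:ℝ) T)) := by
    refine Integrable.of_bound (C := M * (2 * K)) (hmφ0.mul
      (nflux_meas hE κ hrm (measurable_deriv Y))).aestronglyMeasurable ?_
    filter_upwards [hr'] with t ht
    rw [norm_mul]
    gcongr
    · exact (hb _).1
    · exact nflux_bound hE hEκ hκ (hs t) ht
  have hi3 : ∀ ε, Integrable (fun t => |ρ (Y t + ε) t - r t|)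
      (volume.restrict (Ioo (0:ℝ) T)) := by
    intro ε
    refine Integrable.of_bound (C := 1) ((hmρ ε).sub hrm).abs.aestronglyMeasurable ?_
    filter_upwards [hr'] with t ht
    rw [Real.norm_eq_abs, abs_abs]
    have := hρ (Y t + ε) t
    exact abs_le.2 ⟨by linarith [this.1, ht.2], by linarith [this.2, ht.1]⟩
  have est : ∀ ε, |shiftFlux E κ ρ Y φ ε -
      ∫ t in Ioi (0:ℝ), φ (Y t, t) * nflux E κ (r t) (deriv Y t)| ≤
      L * |ε| * (2 * K) * T + M * (2 * K) * ∫ t in Ioo (0:ℝ) T, |ρ (Y t + ε) t - r t| := by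
    intro ε
    unfold shiftFlux
    rw [integral_Ioi_eq_Ioo (T := T), integral_Ioi_eq_Ioo (T := T), ← integral_sub (hi1 ε) hi2]
    · have hB : ∫ t in Ioo (0:ℝ) T, (L * |ε| * (2 * K) + M * (2 * K) * |ρ (Y t + ε) t - r t|) =
          L * |ε| * (2 * K) * T + M * (2 * K) * ∫ t in Ioo (0:ℝ) T, |ρ (Y t + ε) t - r t| := by
        rw [integral_add (integrable_const _) ((hi3 ε).const_mul _),
          integral_const_mul (M * (2 * (K:ℝ))), setIntegral_const, Real.volume_real_Ioo_of_le hT0.le,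
          smul_eq_mul]
        ring
      rw [← hB, ← Real.norm_eq_abs]
      refine norm_integral_le_of_norm_le ((integrable_const _).add ((hi3 ε).const_mul _))
        (ae_of_all _ fun t => ?_)
      have a1 : |φ (Y t + ε, t) - φ (Y t, t)| ≤ L * |ε| := by
        have := hL.dist_le_mul (Y t + ε, t) (Y t, t)
        simpa [Prod.dist_eq, Real.dist_eq] using this
      have a2 := nflux_bound hE hEκ hκ (hs t) (hρ (Y t + ε) t)
      have a3 := nflux_lip hE κ (hs t) (ρ (Y t + ε) t) (r t)
      have a4 := (hb (Y t, t)).1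
      calc ‖_‖ = |(φ (Y t + ε, t) - φ (Y t, t)) * nflux E κ (ρ (Y t + ε) t) (deriv Y t) +
            φ (Y t, t) * (nflux E κ (ρ (Y t + ε) t) (deriv Y t) -
              nflux E κ (r t) (deriv Y t))| := by rw [Real.norm_eq_abs]; ring_nf
        _ ≤ |φ (Y t + ε, t) - φ (Y t, t)| * |nflux E κ (ρ (Y t + ε) t) (deriv Y t)| +
            |φ (Y t, t)| * |nflux E κ (ρ (Y t + ε) t) (deriv Y t) -
              nflux E κ (r t) (deriv Y t)| := by
            rw [← abs_mul, ← abs_mul]; exact abs_add_le _ _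
        _ ≤ L * |ε| * (2 * K) + M * (2 * K * |ρ (Y t + ε) t - r t|) := by gcongr
        _ = _ := by ring
    · intro t ht
      rw [(h0 _ t (fun hc => by linarith [hc.1.2])).1, zero_mul]
    · intro t ht
      rw [(h0 _ t (fun hc => by linarith [hc.1.2])).1, zero_mul]
  rw [tendsto_iff_norm_sub_tendsto_zero]
  refine squeeze_zero (fun _ => norm_nonneg _) est ?_
  have l1 : Tendsto (fun ε : ℝ => |ε|) l (𝓝 0) := by
    simpa using (continuous_abs.tendsto (0:ℝ)).mono_left hl
  have := (((l1.const_mul (L:ℝ)).mul_const (2 * (K:ℝ))).mul_const T).add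
    ((htr T hT0).const_mul (M * (2 * K)))
  simpa using this

end Limit

/-! ### The entropy inequality across the interface -/

/-- The pointwise limit of the profiles `z ↦ θ(z/ε)` as `ε → 0⁺`: equal to `a` on the left, `b` on
the right, and `0` at the origin. -/
def stepW (a b z : ℝ) : ℝ := if z < 0 then a else if 0 < z then b else 0

theorem stepW_meas (a b : ℝ) : Measurable (stepW a b) :=
  Measurable.ite measurableSet_Iio measurable_const
    (Measurable.ite measurableSet_Ioi measurable_const measurable_const)

theorem profile_lim {θ : ℝ → ℝ} {a b : ℝ} (h0 : θ 0 = 0) (hb : ∀ z, 1 ≤ z → θ z = b)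
    (ha : ∀ z, z ≤ -1 → θ z = a) (z : ℝ) :
    Tendsto (fun ε => θ (z / ε)) (𝓝[>] 0) (𝓝 (stepW a b z)) := by
  refine tendsto_const_nhds.congr' ?_
  rcases lt_trichotomy z 0 with hz | hz | hz
  · filter_upwards [Ioo_mem_nhdsGT (neg_pos.2 hz)] with ε hε
    rw [ha _ (by rw [div_le_iff₀ hε.1]; linarith [hε.2])]
    simp [stepW, hz]
  · subst hz; filter_upwards with ε; simp [stepW, h0]
  · filter_upwards [Ioo_mem_nhdsGT hz] with ε hε
    rw [hb _ (by rw [le_div_iff₀ hε.1]; linarith [hε.2])]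
    simp [stepW, hz, hz.le.not_gt]

theorem deriv_profile_zero {θ : ℝ → ℝ} {a b : ℝ} (hb : ∀ z, 1 ≤ z → θ z = b)
    (ha : ∀ z, z ≤ -1 → θ z = a) {z : ℝ} (hz : z ∉ Icc (-1:ℝ) 1) : deriv θ z = 0 := by
  rw [mem_Icc, not_and_or, not_le, not_le] at hz
  rcases hz with hz | hz
  · have : θ =ᶠ[𝓝 z] fun _ => a := by
      filter_upwards [Iio_mem_nhds hz] with x hx using ha x (le_of_lt hx)
    rw [this.deriv_eq]; simp
  · have : θ =ᶠ[𝓝 z] fun _ => b := by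
      filter_upwards [Ioi_mem_nhds hz] with x hx using hb x (le_of_lt hx)
    rw [this.deriv_eq]; simp

/-- The total mass of the derivative of `θ` is `b` on the right half-line and `-a` on the
left one, because `θ 0 = 0`. -/
theorem integral_deriv_profile {θ : ℝ → ℝ} {a b : ℝ} (hθ : ContDiff ℝ ∞ θ) (h0 : θ 0 = 0)
    (hb : ∀ z, 1 ≤ z → θ z = b) (ha : ∀ z, z ≤ -1 → θ z = a) (I J : ℝ) :
    ∫ z, deriv θ z * (if 0 < z then I else J) = b * I - a * J := by
  have hc : Continuous (deriv θ) := hθ.continuous_deriv (by simp)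
  have hi : Integrable (deriv θ) := hc.integrable_of_hasCompactSupport
    (HasCompactSupport.intro isCompact_Icc fun z hz => deriv_profile_zero hb ha hz)
  have hd : ∀ z, HasDerivAt θ (deriv θ z) z := fun z =>
    (hθ.differentiable (by simp) z).hasDerivAt
  have e1 : ∫ z in Ioi (0:ℝ), deriv θ z = b := by
    rw [integral_Ioi_of_hasDerivAt_of_tendsto' (fun z _ => hd z) hi.integrableOn
      (tendsto_const_nhds.congr' (f₁ := fun _ => b) ?_), h0, sub_zero]
    filter_upwards [eventually_ge_atTop 1] with z hz using (hb z hz).symm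
  have e2 : ∫ z in Iic (0:ℝ), deriv θ z = -a := by
    rw [integral_Iic_of_hasDerivAt_of_tendsto' (fun z _ => hd z) hi.integrableOn
      (tendsto_const_nhds.congr' (f₁ := fun _ => a) ?_), h0, zero_sub]
    filter_upwards [eventually_le_atBot (-1)] with z hz using (ha z hz).symm
  have hi' : Integrable (fun z => deriv θ z * (if 0 < z then I else J)) := by
    refine hi.mul_bdd (c := max |I| |J|) ?_ ?_
    · exact (Measurable.ite measurableSet_Ioi measurable_const
        measurable_const).aestronglyMeasurable
    · refine ae_of_all _ fun z => ?_
      split_ifs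
      · exact le_max_left _ _
      · exact le_max_right _ _
  rw [← setIntegral_univ, ← Iic_union_Ioi (a := (0:ℝ)), setIntegral_union (Iic_disjoint_Ioi le_rfl)
    measurableSet_Ioi hi'.integrableOn hi'.integrableOn,
    setIntegral_congr_fun (g := fun z => deriv θ z * J) measurableSet_Iic
      (fun z hz => by simp [not_lt.2 (mem_Iic.1 hz)]),
    setIntegral_congr_fun (g := fun z => deriv θ z * I) measurableSet_Ioi
      (fun z hz => by simp [mem_Ioi.1 hz]), integral_mul_const, integral_mul_const, e1, e2]
  ring

section Main

variable {E : ℝ → ℝ} {K : ℝ≥0} {κ : ℝ} {ρ : ℝ → ℝ → ℝ} {Y : ℝ → ℝ} {φ : ℝ × ℝ → ℝ}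

/-- The part of the cut-off integrand carrying the derivative of `θ((x - Y(t))/ε)`; it is
concentrated in the layer `|x - Y(t)| ≤ ε`. The point `p` has coordinates `(t, x)`. -/
def layerInt (E : ℝ → ℝ) (κ : ℝ) (ρ : ℝ → ℝ → ℝ) (Y : ℝ → ℝ) (φ : ℝ × ℝ → ℝ) (θ : ℝ → ℝ)
    (ε : ℝ) (p : ℝ × ℝ) : ℝ :=
  φ p.swap * (deriv θ ((p.2 - Y p.1) / ε) / ε) * nflux E κ (ρ p.2 p.1) (deriv Y p.1)

/-- The change of variables `x = Y(t) + ε z` turns the layer integral into an average of fluxes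
through shifted interfaces. The measurability statement is what dominated convergence in `z`
requires. -/
theorem layer_eq (hE : LipschitzWith K E) (hEκ : E κ = 0)
    (hκ : κ ∈ Icc (0:ℝ) 1) (hρm : Measurable fun p : ℝ × ℝ => ρ p.1 p.2)
    (hρ : ∀ x t, ρ x t ∈ Icc (0:ℝ) 1) (hY : LipschitzWith K Y)
    (hφ : TestFun φ) {θ : ℝ → ℝ} {a b : ℝ}
    (hb : ∀ z, 1 ≤ z → θ z = b) (ha : ∀ z, z ≤ -1 → θ z = a) {D : ℝ}
    (hD : ∀ z, |deriv θ z| ≤ D) {ε : ℝ} (hε : 0 < ε) :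
    Integrable (layerInt E κ ρ Y φ θ ε) htx ∧
    AEStronglyMeasurable (fun z => deriv θ z * shiftFlux E κ ρ Y φ (ε * z)) volume ∧
    ∫ p, layerInt E κ ρ Y φ θ ε p ∂htx = ∫ z, deriv θ z * shiftFlux E κ ρ Y φ (ε * z) := by
  obtain ⟨-, -, R, M, hR, hM, hbd, h0⟩ := testFun_data hφ
  have hD0 : 0 ≤ D := (abs_nonneg _).trans (hD 0)
  have hs : ∀ t, |deriv Y t| ≤ K := fun t => norm_deriv_le_of_lipschitz hY
  have hmd : Measurable (deriv θ) := measurable_deriv θ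
  have hmY : Measurable Y := hY.continuous.measurable
  have hmφ : Measurable φ := hφ.1.continuous.measurable
  have hmdY : Measurable fun p : ℝ × ℝ => deriv Y p.1 := (measurable_deriv Y).comp measurable_fst
  have hint : Integrable (layerInt E κ ρ Y φ θ ε) htx := by
    refine integrable_of_box (R := R) (C := M * (D / ε) * (2 * K)) ?_ ?_ ?_
    · refine Measurable.aestronglyMeasurable ?_
      unfold layerInt
      exact ((hmφ.comp measurable_swap).mul ((hmd.comp ((measurable_snd.sub
        (hmY.comp measurable_fst)).div_const ε)).div_const ε)).mul
        (nflux_meas hE κ (hρm.comp measurable_swap) hmdY)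
    · intro p
      unfold layerInt
      rw [abs_mul, abs_mul, abs_div, abs_of_pos hε]
      gcongr
      · exact (hbd _).1
      · exact hD _
      · exact nflux_bound hE hEκ hκ (hs _) (hρ _ _)
    · rintro ⟨t, x⟩ hp
      simp [layerInt, (h0 x t hp).1]
  set H : ℝ → ℝ → ℝ := fun t z => deriv θ z *
    (φ (Y t + ε * z, t) * nflux E κ (ρ (Y t + ε * z) t) (deriv Y t)) with hH
  have hHint : Integrable (Function.uncurry H) htx := by
    refine integrable_of_box (R := max R 1) (C := D * (M * (2 * K))) ?_ ?_ ?_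
    · refine Measurable.aestronglyMeasurable ?_
      have hx : Measurable fun p : ℝ × ℝ => (Y p.1 + ε * p.2, p.1) :=
        ((hmY.comp measurable_fst).add (measurable_snd.const_mul ε)).prodMk measurable_fst
      exact (hmd.comp measurable_snd).mul ((hmφ.comp hx).mul
        (nflux_meas hE κ (hρm.comp hx) hmdY))
    · intro p
      simp only [Function.uncurry, hH]
      rw [abs_mul, abs_mul]
      gcongr
      · exact hD _
      · exact (hbd _).1
      · exact nflux_bound hE hEκ hκ (hs _) (hρ _ _)
    · rintro ⟨t, z⟩ hp
      simp only [Function.uncurry, hH]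
      by_cases ht : t ∈ Icc (-R) R
      · have hz : z ∉ Icc (-1:ℝ) 1 := by
          intro hz
          apply hp
          refine ⟨⟨?_, ?_⟩, ⟨?_, ?_⟩⟩
          · linarith [ht.1, le_max_left R 1]
          · exact ht.2.trans (le_max_left _ _)
          · linarith [hz.1, le_max_right R 1]
          · exact hz.2.trans (le_max_right _ _)
        rw [deriv_profile_zero hb ha hz, zero_mul]
      · rw [(h0 _ t (fun hc => ht hc.1)).1]; simp
  have hfun : (fun z => deriv θ z * shiftFlux E κ ρ Y φ (ε * z)) =
      fun z => ∫ t in Ioi (0:ℝ), H t z := by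
    ext z
    simp only [shiftFlux, hH]
    rw [integral_const_mul]
  refine ⟨hint, ?_, ?_⟩
  · rw [hfun]
    exact (Integrable.integral_prod_right hHint).aestronglyMeasurable
  · rw [hfun]
    unfold htx at hint hHint ⊢
    rw [← integral_integral_swap hHint, integral_prod _ hint]
    congr 1
    ext t
    have e1 := integral_add_left_eq_self (μ := volume)
      (fun x => layerInt E κ ρ Y φ θ ε (t, x)) (Y t)
    have e2 := Measure.integral_comp_mul_left
      (fun x => layerInt E κ ρ Y φ θ ε (t, Y t + x)) ε
    rw [e1, abs_of_pos (inv_pos.2 hε), smul_eq_mul, eq_inv_mul_iff_mul_eq₀ hε.ne',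
      ← integral_const_mul] at e2
    rw [← e2]
    congr 1
    ext z
    simp only [layerInt, hH, Prod.swap_prod_mk, add_sub_cancel_left, mul_div_cancel_left₀ _ hε.ne']
    field_simp

theorem layer_tendsto (hE : LipschitzWith K E) (hEκ : E κ = 0)
    (hκ : κ ∈ Icc (0:ℝ) 1) (hρm : Measurable fun p : ℝ × ℝ => ρ p.1 p.2)
    (hρ : ∀ x t, ρ x t ∈ Icc (0:ℝ) 1) (hY : LipschitzWith K Y)
    (hφ : TestFun φ) {rm rp : ℝ → ℝ} (hrm : Measurable rm) (hrp : Measurable rp)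
    (hrm1 : ∀ᵐ t ∂(volume.restrict (Ioi (0:ℝ))), rm t ∈ Icc (0:ℝ) 1)
    (hrp1 : ∀ᵐ t ∂(volume.restrict (Ioi (0:ℝ))), rp t ∈ Icc (0:ℝ) 1)
    (htr : HasTraces Y ρ rm rp) {θ : ℝ → ℝ} {a b : ℝ} (hθ : ContDiff ℝ ∞ θ) (h0 : θ 0 = 0)
    (hb : ∀ z, 1 ≤ z → θ z = b) (ha : ∀ z, z ≤ -1 → θ z = a) {D : ℝ}
    (hD : ∀ z, |deriv θ z| ≤ D) :
    Tendsto (fun ε => ∫ p, layerInt E κ ρ Y φ θ ε p ∂htx) (𝓝[>] 0)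
      (𝓝 (b * (∫ t in Ioi (0:ℝ), φ (Y t, t) * nflux E κ (rp t) (deriv Y t)) -
        a * ∫ t in Ioi (0:ℝ), φ (Y t, t) * nflux E κ (rm t) (deriv Y t))) := by
  have hD0 : 0 ≤ D := (abs_nonneg _).trans (hD 0)
  obtain ⟨C, hC⟩ := shiftFlux_bound hE hEκ hκ hρ hY hφ
  have hp := shiftFlux_tendsto hE hEκ hκ hρm hρ hY hφ hrp hrp1 (l := 𝓝[>] 0) nhdsWithin_le_nhds
    fun T hT => (htr T hT).2
  have hm := shiftFlux_tendsto hE hEκ hκ hρm hρ hY hφ hrm hrm1 (l := 𝓝[<] 0) nhdsWithin_le_nhds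
    fun T hT => by
      have hneg : Tendsto (fun ε : ℝ => -ε) (𝓝[<] 0) (𝓝[>] 0) := by
        simpa using tendsto_neg_nhdsLT (a := (0:ℝ))
      simpa [Function.comp_def] using (htr T hT).1.comp hneg
  rw [← integral_deriv_profile hθ h0 hb ha]
  have heq : (fun ε => ∫ p, layerInt E κ ρ Y φ θ ε p ∂htx) =ᶠ[𝓝[>] 0]
      fun ε => ∫ z, deriv θ z * shiftFlux E κ ρ Y φ (ε * z) := by
    filter_upwards [self_mem_nhdsWithin] with ε hε
    exact (layer_eq hE hEκ hκ hρm hρ hY hφ hb ha hD hε).2.2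
  refine Tendsto.congr' heq.symm ?_
  refine tendsto_integral_filter_of_dominated_convergence
    ((Icc (-1:ℝ) 1).indicator fun _ => D * C) ?_ ?_ ?_ ?_
  · filter_upwards [self_mem_nhdsWithin] with ε hε
    exact (layer_eq hE hEκ hκ hρm hρ hY hφ hb ha hD hε).2.1
  · refine Eventually.of_forall fun ε => ae_of_all _ fun z => ?_
    by_cases hz : z ∈ Icc (-1:ℝ) 1
    · rw [indicator_of_mem hz, norm_mul]
      gcongr
      · exact hD z
      · exact hC _
    · rw [indicator_of_notMem hz, deriv_profile_zero hb ha hz]; simp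
  · exact (integrable_indicator_iff measurableSet_Icc).2 (integrableOn_const measure_Icc_lt_top.ne)
  · have hne : ∀ᵐ z : ℝ, z ≠ 0 := Measure.ae_ne volume 0
    filter_upwards [hne] with z hz
    refine Tendsto.const_mul _ ?_
    rcases lt_or_gt_of_ne hz with hz | hz
    · rw [if_neg hz.le.not_gt]
      refine hm.comp (tendsto_nhdsWithin_iff.2 ⟨?_, ?_⟩)
      · have : Tendsto (fun ε : ℝ => ε * z) (𝓝 0) (𝓝 (0 * z)) := tendsto_id.mul_const z
        rw [zero_mul] at this
        exact this.mono_left nhdsWithin_le_nhds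
      · filter_upwards [self_mem_nhdsWithin] with ε hε using mul_neg_of_pos_of_neg hε hz
    · rw [if_pos hz]
      refine hp.comp (tendsto_nhdsWithin_iff.2 ⟨?_, ?_⟩)
      · have : Tendsto (fun ε : ℝ => ε * z) (𝓝 0) (𝓝 (0 * z)) := tendsto_id.mul_const z
        rw [zero_mul] at this
        exact this.mono_left nhdsWithin_le_nhds
      · filter_upwards [self_mem_nhdsWithin] with ε hε using mul_pos hε hz

/-- The entropy inequality for the discontinuous test function `φ` times the weight `a` to the left
and `b` to the right of the interface: a jump term appears, given by the fluxes of the two traces.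
The initial-datum term uses the starting point `Y 0`. -/
theorem interface_ineq (hE : LipschitzWith K E) (hEκ : E κ = 0)
    (hκ : κ ∈ Icc (0:ℝ) 1) (hρm : Measurable fun p : ℝ × ℝ => ρ p.1 p.2)
    (hρ : ∀ x t, ρ x t ∈ Icc (0:ℝ) 1) (hY : LipschitzWith K Y)
    {rm rp : ℝ → ℝ} (hrm : Measurable rm) (hrp : Measurable rp)
    (hrm1 : ∀ᵐ t ∂(volume.restrict (Ioi (0:ℝ))), rm t ∈ Icc (0:ℝ) 1)
    (hrp1 : ∀ᵐ t ∂(volume.restrict (Ioi (0:ℝ))), rp t ∈ Icc (0:ℝ) 1)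
    (htr : HasTraces Y ρ rm rp)
    {ρo : ℝ → ℝ} (hρo_meas : Measurable ρo) (hρo_mem : ∀ x, ρo x ∈ Icc (0:ℝ) 1)
    (Hsol : ∀ φ, TestFun φ → Disjoint (tsupport φ) (Gam Y) →
      0 ≤ (∫ t in Ioi (0:ℝ), ∫ x, (|ρ x t - κ| * pT φ (x, t) + E (ρ x t) * pX φ (x, t))) +
        ∫ x, |ρo x - κ| * φ (x, 0))
    (hφ : TestFun φ) {a b : ℝ} (ha1 : a ∈ Icc (0:ℝ) 1) (hb1 : b ∈ Icc (0:ℝ) 1) :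
    0 ≤ (∫ t in Ioi (0:ℝ), ∫ x, stepW a b (x - Y t) *
        (|ρ x t - κ| * pT φ (x, t) + E (ρ x t) * pX φ (x, t))) +
      (∫ x, |ρo x - κ| * (φ (x, 0) * stepW a b (x - Y 0))) +
      (b * (∫ t in Ioi (0:ℝ), φ (Y t, t) * nflux E κ (rp t) (deriv Y t)) -
        a * ∫ t in Ioi (0:ℝ), φ (Y t, t) * nflux E κ (rm t) (deriv Y t)) := by
  obtain ⟨θ, hθ, hθ1, hθ0, hb, ha⟩ := exists_profile ha1 hb1
  have h00 : θ 0 = 0 := hθ0 0 (by simp)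
  have hcd : Continuous (deriv θ) := hθ.continuous_deriv (by simp)
  have hd : Differentiable ℝ θ := hθ.differentiable (by simp)
  obtain ⟨D, hD⟩ : ∃ D, ∀ z, ‖deriv θ z‖ ≤ D :=
    (HasCompactSupport.intro isCompact_Icc
      fun z hz => deriv_profile_zero hb ha hz).exists_bound_of_continuous hcd
  simp only [Real.norm_eq_abs] at hD
  have hD0 : 0 ≤ D := (abs_nonneg _).trans (hD 0)
  obtain ⟨c1, c2, R, M, hR, hM, hbd, h0⟩ := testFun_data hφ
  have hdist : ∀ r ∈ Icc (0:ℝ) 1, |r - κ| ≤ 1 := fun r hr =>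
    abs_le.2 ⟨by linarith [hr.1, hκ.2], by linarith [hr.2, hκ.1]⟩
  set P : ℝ × ℝ → ℝ := fun p => |ρ p.1 p.2 - κ| with hPdef
  set Q : ℝ × ℝ → ℝ := fun p => E (ρ p.1 p.2) with hQdef
  have hPm : Measurable P := (hρm.sub_const κ).abs
  have hQm : Measurable Q := hE.continuous.measurable.comp hρm
  have hP : ∀ p, |P p| ≤ 1 := fun p => by rw [hPdef, abs_abs]; exact hdist _ (hρ _ _)
  have hQ : ∀ p, |Q p| ≤ K := fun p => by
    have : |E (ρ p.1 p.2) - E κ| ≤ K * |ρ p.1 p.2 - κ| := hE.dist_le_mul _ _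
    rw [hEκ, sub_zero] at this
    have h1 := hdist _ (hρ p.1 p.2)
    have hK : (0:ℝ) ≤ K := K.2
    simp only [hQdef]
    nlinarith
  set B : ℝ × ℝ → ℝ := fun p => P p.swap * pT φ p.swap + Q p.swap * pX φ p.swap with hBdef
  have hBm : Measurable B := ((hPm.comp measurable_swap).mul
    (c1.measurable.comp measurable_swap)).add
      ((hQm.comp measurable_swap).mul (c2.measurable.comp measurable_swap))
  have hBb : ∀ p, |B p| ≤ 1 * M + K * M := by
    intro p
    refine (abs_add_le _ _).trans ?_
    rw [abs_mul, abs_mul]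
    gcongr
    · exact hP _
    · exact (hbd _).2.1
    · exact hQ _
    · exact (hbd _).2.2
  have hB0 : ∀ p, p ∉ box R → B p = 0 := by
    rintro ⟨t, x⟩ hp
    simp [hBdef, (h0 x t hp).2.1, (h0 x t hp).2.2]
  have hmZ : Measurable fun p : ℝ × ℝ => p.2 - Y p.1 :=
    measurable_snd.sub (hY.continuous.measurable.comp measurable_fst)
  have hAbd : ∀ (w : ℝ → ℝ), (∀ z, 0 ≤ w z ∧ w z ≤ 1) → ∀ p : ℝ × ℝ,
      |w (p.2 - Y p.1) * B p| ≤ 1 * M + K * M := by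
    intro w hw p
    rw [abs_mul, abs_of_nonneg (hw _).1]
    refine (mul_le_of_le_one_left (abs_nonneg _) (hw _).2).trans (hBb p)
  have hAint : ∀ (w : ℝ → ℝ), Measurable w → (∀ z, 0 ≤ w z ∧ w z ≤ 1) →
      Integrable (fun p : ℝ × ℝ => w (p.2 - Y p.1) * B p) htx := by
    intro w hwm hw
    refine integrable_of_box (R := R) ((hwm.comp hmZ).mul hBm).aestronglyMeasurable (hAbd w hw) ?_
    intro p hp; rw [hB0 p hp, mul_zero]
  have hθε : ∀ ε, Measurable fun z => θ (z / ε) := fun ε =>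
    hθ.continuous.measurable.comp (measurable_id.div_const ε)
  have hstep : ∀ z, 0 ≤ stepW a b z ∧ stepW a b z ≤ 1 := by
    intro z; unfold stepW; split_ifs
    · exact ha1
    · exact hb1
    · simp
  -- the three limits
  have limA : Tendsto (fun ε => ∫ p, θ ((p.2 - Y p.1) / ε) * B p ∂htx) (𝓝[>] 0)
      (𝓝 (∫ p, stepW a b (p.2 - Y p.1) * B p ∂htx)) := by
    refine tendsto_of_box (R := R) (C := 1 * M + K * M) (Eventually.of_forall fun ε =>
        (((hθε ε).comp hmZ).mul hBm).aestronglyMeasurable)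
      (Eventually.of_forall fun ε => hAbd _ (fun z => hθ1 (z / ε))) ?_ ?_
    · intro ε p hp; rw [hB0 p hp, mul_zero]
    · exact ae_of_all _ fun p => (profile_lim h00 hb ha _).mul_const _
  have limI : Tendsto (fun ε => ∫ x, |ρo x - κ| * (φ (x, 0) * θ ((x - Y 0) / ε))) (𝓝[>] 0)
      (𝓝 (∫ x, |ρo x - κ| * (φ (x, 0) * stepW a b (x - Y 0)))) := by
    have hmφ : Measurable fun x : ℝ => φ (x, 0) :=
      hφ.1.continuous.measurable.comp (measurable_id.prodMk measurable_const)
    refine tendsto_integral_filter_of_dominated_convergence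
      ((Icc (-R) R).indicator fun _ => M) ?_ ?_ ?_ ?_
    · exact Eventually.of_forall fun ε => ((hρo_meas.sub_const κ).abs.mul
        (hmφ.mul ((hθε ε).comp (measurable_id.sub_const (Y 0))))).aestronglyMeasurable
    · refine Eventually.of_forall fun ε => ae_of_all _ fun x => ?_
      by_cases hx : x ∈ Icc (-R) R
      · rw [indicator_of_mem hx, norm_mul, norm_mul, Real.norm_eq_abs, Real.norm_eq_abs,
          Real.norm_eq_abs, abs_abs, abs_of_nonneg (hθ1 _).1]
        have h1 := hdist _ (hρo_mem x)
        have h2 := (hbd (x, 0)).1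
        calc _ ≤ 1 * (M * 1) := by
              gcongr
              · exact mul_nonneg (abs_nonneg _) (hθ1 _).1
              · exact (hθ1 _).1
              · exact (hθ1 _).2
          _ = M := by ring
      · rw [indicator_of_notMem hx, (h0 x 0 fun hc => hx hc.2).1]; simp
    · exact (integrable_indicator_iff measurableSet_Icc).2
        (integrableOn_const measure_Icc_lt_top.ne)
    · exact ae_of_all _ fun x => ((profile_lim h00 hb ha _).const_mul _).const_mul _
  have limL := layer_tendsto hE hEκ hκ hρm hρ hY hφ hrm hrp hrm1 hrp1 htr hθ h00 hb ha hD
  have hiter : ∫ p, stepW a b (p.2 - Y p.1) * B p ∂htx = ∫ t in Ioi (0:ℝ), ∫ x,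
      stepW a b (x - Y t) * (|ρ x t - κ| * pT φ (x, t) + E (ρ x t) * pX φ (x, t)) := by
    have := hAint _ (stepW_meas a b) hstep
    unfold htx at this ⊢
    rw [integral_prod _ this]
    rfl
  rw [← hiter]
  refine ge_of_tendsto ((limA.add limI).add limL) ?_
  filter_upwards [self_mem_nhdsWithin] with ε hε
  have hε : 0 < ε := hε
  have hder : ∀ z, deriv (fun z => θ (z / ε)) z = deriv θ (z / ε) / ε := by
    intro z
    have h1 : HasDerivAt (fun z : ℝ => z / ε) (1 / ε) z := (hasDerivAt_id z).div_const ε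
    have := (hd (z / ε)).hasDerivAt.comp z h1
    rw [show (fun z => θ (z / ε)) = θ ∘ fun z => z / ε from rfl, this.deriv]; ring
  have hsm : ContDiff ℝ ∞ fun z => θ (z / ε) := hθ.comp (contDiff_id.div_const ε)
  have := ineq_cut hPm hQm hP hQ hY Hsol hφ (η := fun z => θ (z / ε)) hsm (fun z => hθ1 _)
    (D := D / ε) (δ := ε / 2) (by positivity)
    (fun z => by rw [hder, abs_div, abs_of_pos hε]; gcongr; exact hD _) (by positivity)
    (fun z hz => hθ0 _ (by
      rw [abs_div, abs_of_pos hε, div_le_iff₀ hε]; linarith))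
  refine this.trans_eq ?_
  have hsplit : ∫ p, cutInt P Q φ (fun z => θ (z / ε)) Y p ∂htx =
      (∫ p, θ ((p.2 - Y p.1) / ε) * B p ∂htx) + ∫ p, layerInt E κ ρ Y φ θ ε p ∂htx := by
    rw [← integral_add (hAint (fun z => θ (z / ε)) (hθε ε) (fun z => hθ1 _))
      (layer_eq hE hEκ hκ hρm hρ hY hφ hb ha hD hε).1]
    congr 1
    ext p
    simp only [cutInt, layerInt, hder, hBdef, hPdef, hQdef, nflux, Prod.fst_swap, Prod.snd_swap]
  rw [hsplit]
  ring

end Main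

theorem interface_integrable {φ : ℝ × ℝ → ℝ} (hφ : TestFun φ) {Y u : ℝ → ℝ} (hY : Continuous Y)
    (hu : Measurable u) {C : ℝ} (hC : ∀ᵐ t ∂(volume.restrict (Ioi (0:ℝ))), |u t| ≤ C) :
    Integrable (fun t => φ (Y t, t) * u t) (volume.restrict (Ioi 0)) := by
  obtain ⟨-, -, R, M, -, hM, hφb, hφ0⟩ := testFun_data hφ
  have hg : Integrable ((Icc (-R) R).indicator fun _ : ℝ => M * C) (volume.restrict (Ioi 0)) :=
    ((integrable_indicator_iff measurableSet_Icc).2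
      (integrableOn_const measure_Icc_lt_top.ne)).restrict
  refine hg.mono' ((hφ.1.continuous.measurable.comp
    (hY.measurable.prodMk measurable_id)).mul hu).aestronglyMeasurable ?_
  filter_upwards [hC] with t ht
  by_cases h : t ∈ Icc (-R) R
  · rw [indicator_of_mem h, norm_mul]
    exact mul_le_mul (hφb _).1 ht (norm_nonneg _) hM
  · rw [indicator_of_notMem h, (hφ0 _ t fun hc => h hc.1).1]
    simp

theorem stepW_one_ae (c : ℝ) : ∀ᵐ x, stepW 1 1 (x - c) = 1 := by
  filter_upwards [compl_mem_ae_iff.2 (measure_singleton c)] with x hx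
  have : x - c ≠ 0 := sub_ne_zero.2 hx
  rcases this.lt_or_gt with h | h <;> simp only [stepW, h, h.not_gt, if_true, if_false]

end Auxiliary

/-! ### Germ solutions are admissible -/

/-- every `G_{ẏ}(q)`-entropy solution is an admissible entropy
solution (entropy inequalities with remainder, and weak constraint inequality). -/
theorem germ_sol_is_adm_sol
    (f : ℝ → ℝ) (ρb : ℝ) (hf : BellShaped f ρb)
    (ρo : ℝ → ℝ) (hρo_meas : Measurable ρo) (hρo_mem : ∀ x, ρo x ∈ Icc (0:ℝ) 1)
    (y : ℝ → ℝ) (hy : LocLip y)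
    (q : ℝ → ℝ) (hq_meas : Measurable q) (hq_bdd : LocBdd q)
    (hadm : ∀ᵐ t ∂(volume.restrict (Ioi (0:ℝ))), AdmissiblePair f (deriv y t) (q t))
    (ρ : ℝ → ℝ → ℝ) (hρ_meas : Measurable fun p : ℝ × ℝ => ρ p.1 p.2)
    (hρ_mem : ∀ x t, ρ x t ∈ Icc (0:ℝ) 1)
    (ρm ρp : ℝ → ℝ) (hρm : Measurable ρm) (hρp : Measurable ρp)
    (hsol : IsGermSol f ρo y q ρ ρm ρp) :
    IsAdmSol f ρo y q ρ := by
  obtain ⟨K, hK⟩ := bell_lip hf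
  have hbd : ∀ᵐ t ∂(volume.restrict (Ioi (0:ℝ))), |deriv y t| ≤ K ∧ |q t| ≤ 2 * K := by
    filter_upwards [hadm] with t ht
    exact adm_bounds hK hf.zero_at_zero hf.zero_at_one ht
  obtain ⟨Y, hY, hyY⟩ := lip_of_deriv_bound hy (hbd.mono fun t h => h.1)
  obtain ⟨g, hg, hfg⟩ := hK.extend_real
  have hder : ∀ t ∈ Ioi (0:ℝ), deriv y t = deriv Y t := fun t ht =>
    (hyY.eventuallyEq_of_mem (Ioi_mem_nhds ht)).deriv_eq
  have hGam : Gam y = Gam Y := by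
    ext p
    constructor
    · rintro ⟨t, ht, rfl⟩; exact ⟨t, ht, by rw [hyY ht]⟩
    · rintro ⟨t, ht, rfl⟩; exact ⟨t, ht, by rw [hyY ht]⟩
  obtain ⟨hent, htr, hgerm⟩ := hsol
  have htrY : HasTraces Y ρ ρm ρp := by
    intro T hT
    obtain ⟨h1, h2⟩ := htr T hT
    refine ⟨h1.congr fun ε => setIntegral_congr_fun measurableSet_Ioo fun t ht => ?_,
      h2.congr fun ε => setIntegral_congr_fun measurableSet_Ioo fun t ht => ?_⟩
    · simp only [hyY (mem_Ioi.2 ht.1)]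
    · simp only [hyY (mem_Ioi.2 ht.1)]
  have hflux : ∀ r ∈ Icc (0:ℝ) 1, ∀ κ ∈ Icc (0:ℝ) 1, ∀ s,
      EFlx f s r κ = EFlx g s r κ := by
    intro r hr κ hκ s
    simp only [EFlx, Flx, hfg hr, hfg hκ]
  have hsolE : ∀ κ ∈ Icc (0:ℝ) 1, ∀ φ, TestFun φ → Disjoint (tsupport φ) (Gam Y) →
      0 ≤ (∫ t in Ioi (0:ℝ), ∫ x,
        (|ρ x t - κ| * pT φ (x, t) + EFlx g 0 (ρ x t) κ * pX φ (x, t))) +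
        ∫ x, |ρo x - κ| * φ (x, 0) := by
    intro κ hκ φ hφ hd
    have := hent κ hκ φ hφ (hGam ▸ hd)
    simpa only [interiorTerm, initTerm, hflux _ (hρ_mem _ _) κ hκ] using this
  have hρm1 : ∀ᵐ t ∂(volume.restrict (Ioi (0:ℝ))), ρm t ∈ Icc (0:ℝ) 1 :=
    hgerm.mono fun t h => h.1
  have hρp1 : ∀ᵐ t ∂(volume.restrict (Ioi (0:ℝ))), ρp t ∈ Icc (0:ℝ) 1 :=
    hgerm.mono fun t h => h.2.1
  -- the entropy inequality with weights `a` and `b` on the two sides of the interface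
  have hcut := fun (κ : ℝ) (hκ : κ ∈ Icc (0:ℝ) 1) (φ : ℝ × ℝ → ℝ) (hφ : TestFun φ) (a b : ℝ) =>
    interface_ineq (a := a) (b := b) (EFlx_lip hg κ) (by simp [EFlx]) hκ hρ_meas hρ_mem hY
      hρm hρp hρm1 hρp1 htrY hρo_meas hρo_mem (hsolE κ hκ) hφ
  -- on the interface, the flux of the extension is the flux of `f`
  have hnf : ∀ κ ∈ Icc (0:ℝ) 1, ∀ r ∈ Icc (0:ℝ) 1, ∀ s,
      nflux (fun r => EFlx g 0 r κ) κ r s = EFlx f s r κ := by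
    intro κ hκ r hr s
    rw [hflux r hr κ hκ, EFlx_eq]; rfl
  have hYc := hY.continuous
  have hEfb : ∀ κ ∈ Icc (0:ℝ) 1, ∀ r ∈ Icc (0:ℝ) 1, ∀ s : ℝ, |s| ≤ K →
      |EFlx f s r κ| ≤ 2 * K := by
    intro κ hκ r hr s hs
    have h1 : |EFlx g 0 r κ - EFlx g 0 κ κ| ≤ K * |r - κ| := (EFlx_lip hg κ).dist_le_mul r κ
    have h2 : EFlx g 0 κ κ = 0 := by simp [EFlx]
    have h3 : |r - κ| ≤ 1 := abs_le.2 ⟨by linarith [hr.1, hκ.2], by linarith [hr.2, hκ.1]⟩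
    rw [h2, sub_zero] at h1
    rw [hflux r hr κ hκ, EFlx_eq]
    refine (abs_sub _ _).trans ?_
    rw [abs_mul, abs_abs]
    have hKn : (0:ℝ) ≤ K := K.2
    nlinarith [mul_le_mul hs h3 (abs_nonneg _) hKn, mul_le_mul_of_nonneg_left h3 hKn]
  constructor
  -- equal weights on both sides: the jump of the fluxes is controlled by the germ inequality
  · intro κ hκ φ hφ
    obtain ⟨-, -, R, M, hR, hM, hφb, hφ0⟩ := testFun_data hφ
    have hφint := fun u hu C hC => interface_integrable (u := u) hφ hYc hu (C := C) hC
    have h := hcut κ hκ φ hφ 1 1 (by simp) (by simp)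
    have h1 : ∀ t, (∫ x, stepW 1 1 (x - Y t) *
        (|ρ x t - κ| * pT φ (x, t) + EFlx g 0 (ρ x t) κ * pX φ (x, t))) = ∫ x,
        (|ρ x t - κ| * pT φ (x, t) + EFlx f 0 (ρ x t) κ * pX φ (x, t)) := by
      intro t
      refine integral_congr_ae ?_
      filter_upwards [stepW_one_ae (Y t)] with x hx
      rw [hx, one_mul, hflux _ (hρ_mem _ _) κ hκ]
    have h2 : (∫ x, |ρo x - κ| * (φ (x, 0) * stepW 1 1 (x - Y 0))) = initTerm ρo κ φ := by
      refine integral_congr_ae ?_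
      filter_upwards [stepW_one_ae (Y 0)] with x hx
      rw [hx, mul_one]
    simp only [h1, h2, one_mul] at h
    change 0 ≤ interiorTerm f ρ κ φ + initTerm ρo κ φ + _ at h
    refine h.trans (add_le_add_right ?_ _)
    have hEm : Measurable fun r => EFlx g 0 r κ := (EFlx_lip hg κ).continuous.measurable
    have hint : ∀ r : ℝ → ℝ, Measurable r →
        (∀ᵐ t ∂(volume.restrict (Ioi (0:ℝ))), r t ∈ Icc (0:ℝ) 1) →
        Integrable (fun t => φ (Y t, t) * nflux (fun r => EFlx g 0 r κ) κ (r t) (deriv Y t))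
          (volume.restrict (Ioi 0)) := by
      intro r hr hr1
      refine hφint _ ?_ (2 * K) ?_
      · exact (hEm.comp hr).sub ((measurable_deriv Y).mul (hr.sub_const κ).abs)
      · filter_upwards [hr1, hbd, ae_restrict_mem measurableSet_Ioi] with t h1 h2 h3
        rw [hnf κ hκ _ h1]
        exact hEfb κ hκ _ h1 _ (hder t h3 ▸ h2.1)
    rw [← integral_sub (hint ρp hρp hρp1) (hint ρm hρm hρm1)]
    have hrem : remTerm f y q κ φ =
        ∫ t in Ioi (0:ℝ), φ (Y t, t) * Rem f (deriv Y t) κ (q t) := by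
      refine setIntegral_congr_fun measurableSet_Ioi fun t ht => ?_
      simp only [hder t ht, hyY ht]
      ring
    rw [hrem]
    refine integral_mono_ae ((hint ρp hρp hρp1).sub (hint ρm hρm hρm1)) ?_ ?_
    · refine hφint _ ?_ (2 * (|f κ| + K + (|f κ| + K + 2 * K))) ?_
      · have hm : Measurable fun t => f κ - deriv Y t * κ :=
          ((measurable_deriv Y).mul_const κ).const_sub (f κ)
        exact (hm.sub (hm.min hq_meas)).const_mul 2
      · filter_upwards [hbd, ae_restrict_mem measurableSet_Ioi] with t h2 h3
        rw [hder t h3] at h2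
        have hF : |f κ - deriv Y t * κ| ≤ |f κ| + K := by
          refine (abs_sub _ _).trans ?_
          rw [abs_mul, abs_of_nonneg hκ.1]
          have := mul_le_mul h2.1 hκ.2 hκ.1 K.2
          linarith
        have hm : |min (f κ - deriv Y t * κ) (q t)| ≤ |f κ| + K + 2 * K := by
          refine abs_min_le_max_abs_abs.trans (max_le ?_ ?_)
          · linarith [(abs_nonneg (q t)).trans h2.2]
          · linarith [abs_nonneg (f κ), (abs_nonneg _).trans h2.1]
        simp only [Rem, Flx]
        rw [abs_mul, abs_two]
        have := abs_sub (f κ - deriv Y t * κ) (min (f κ - deriv Y t * κ) (q t))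
        linarith
    · filter_upwards [hgerm, ae_restrict_mem measurableSet_Ioi] with t h1 h3
      rw [hnf κ hκ _ h1.1, hnf κ hκ _ h1.2.1, ← mul_sub]
      rw [hder t h3] at h1
      exact mul_le_mul_of_nonneg_left (germ_ineq hf.concave h1) (hφ.2.2 _)
  -- for `κ = 0` and `0 ≤ r ≤ 1` the entropy flux is `F_s(r)` itself, and the weight `0` on the
  -- left leaves the integral over `{x > y(t)}`
  · intro φ hφ hsupp
    have hφint := fun u hu C hC => interface_integrable (u := u) hφ hYc hu (C := C) hC
    have h0 : (0:ℝ) ∈ Icc (0:ℝ) 1 := by simp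
    have hE0 : ∀ r ∈ Icc (0:ℝ) 1, ∀ s, EFlx f s r 0 = Flx f s r := by
      intro r hr s
      rcases hr.1.eq_or_lt with rfl | hr
      · simp [EFlx, Flx, hf.zero_at_zero]
      · simp [EFlx, Flx, hf.zero_at_zero, Real.sign_of_pos hr]
    have h := hcut 0 h0 φ hφ 0 1 (by simp) (by simp)
    have h1 : ∀ t ∈ Ioi (0:ℝ), (∫ x, stepW 0 1 (x - Y t) *
        (|ρ x t - 0| * pT φ (x, t) + EFlx g 0 (ρ x t) 0 * pX φ (x, t))) = ∫ x in Ioi (y t),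
        (ρ x t * pT φ (x, t) + f (ρ x t) * pX φ (x, t)) := by
      intro t ht
      rw [← integral_indicator measurableSet_Ioi]
      congr 1
      ext x
      rw [← hflux _ (hρ_mem _ _) 0 h0, hE0 _ (hρ_mem _ _), sub_zero,
        abs_of_nonneg (hρ_mem x t).1, hyY ht]
      by_cases hx : Y t < x
      · rw [indicator_of_mem (mem_Ioi.2 hx)]
        simp [stepW, hx, hx.le, Flx]
      · rw [indicator_of_notMem (by simpa using hx)]
        simp [stepW, hx]
    have h2 : ∀ x : ℝ, φ (x, 0) = 0 := fun x =>
      image_eq_zero_of_notMem_tsupport fun hx => lt_irrefl _ (mem_Ioi.1 (hsupp hx).2)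
    rw [setIntegral_congr_fun measurableSet_Ioi h1] at h
    simp only [h2, zero_mul, mul_zero, integral_zero, add_zero, one_mul, sub_zero] at h
    refine (neg_le_iff_add_nonneg'.2 h).trans ?_
    have hEm : Measurable fun r => EFlx g 0 r 0 := (EFlx_lip hg 0).continuous.measurable
    have hrhs : ∫ t in Ioi (0:ℝ), q t * φ (y t, t) = ∫ t in Ioi (0:ℝ), φ (Y t, t) * q t :=
      setIntegral_congr_fun measurableSet_Ioi fun t ht => by simp only [hyY ht]; ring
    rw [hrhs]
    refine integral_mono_ae ?_ ?_ ?_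
    · refine hφint _ ?_ (2 * K) ?_
      · have := (hEm.comp hρp).sub ((measurable_deriv Y).mul (hρp.sub_const 0).abs)
        exact this
      · filter_upwards [hρp1, hbd, ae_restrict_mem measurableSet_Ioi] with t h1 h2 h3
        rw [hnf 0 h0 _ h1]
        exact hEfb 0 h0 _ h1 _ (hder t h3 ▸ h2.1)
    · exact hφint _ hq_meas (2 * K) (hbd.mono fun t h => h.2)
    · filter_upwards [hgerm, ae_restrict_mem measurableSet_Ioi] with t h1 h3
      rw [hnf 0 h0 _ h1.2.1, hE0 _ h1.2.1, ← hder t h3]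
      refine mul_le_mul_of_nonneg_left ?_ (hφ.2.2 _)
      obtain ⟨-, -, ⟨-, -, h⟩ | ⟨he, h⟩ | ⟨-, he, h⟩⟩ := h1
      · exact h.le
      · simp only at he; rw [← he]; exact h
      · simp only at he; rw [← he]; exact h
end
end
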